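/- arXiv:1107.0557 — 2 statements merged into one kernel-verified Lean document; each statement's English description precedes it below -/
import Mathlib

section
/- Let M be a finitely generated right R-module. If Ext¹_R(M, −) commutes with direct limits (filtered colimits), then M is an fp-Ω¹-module, i.e., there is an exact sequence 0 → K → P → M → 0 with P projective and K finitely presented. -/
open CategoryTheory CategoryTheory.Limits Opposite

noncomputable section

/-- The category of right `R`-modules. -/
abbrev RMod (R : Type) [Ring R] := ModuleCat.{0} Rᵐᵒᵖ

/-- `R` as a right module over itself. -/
abbrev regR (R : Type) [Ring R] : RMod R := ModuleCat.of Rᵐᵒᵖ R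

/-- The covariant functor `Ext¹_R(M, -)` (more generally `Extⁿ_R(M, -)`). -/
abbrev extFun (R : Type) [Ring R] (n : ℕ) (M : RMod R) : RMod R ⥤ ModuleCat ℤ :=
  (Ext ℤ (RMod R) n).obj (op M)

/-- `Ext¹_R(M,-)` commutes with direct limits (direct systems over directed sets). -/
def CommutesWithDirectLimits (R : Type) [Ring R] (M : RMod R) : Prop :=
  ∀ (J : Type) [Preorder J] [IsDirected J (· ≤ ·)] [Nonempty J],
    PreservesColimitsOfShape J (extFun R 1 M)

/-- `Ext¹_R(M,-)` commutes with direct sums. -/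
def CommutesWithDirectSums (R : Type) [Ring R] (M : RMod R) : Prop :=
  ∀ (ι : Type), PreservesColimitsOfShape (Discrete ι) (extFun R 1 M)

/-- `Extⁿ_R(M,-)` commutes with direct sums of copies of `R`: the canonical map
`Extⁿ_R(M,R)^{(ι)} → Extⁿ_R(M,R^{(ι)})` is an isomorphism for every index set `ι`. -/
def CommutesWithSumsOfR (R : Type) [Ring R] (n : ℕ) (M : RMod R) : Prop :=
  ∀ (ι : Type), IsIso (Sigma.desc
    (fun i : ι => (extFun R n M).map (Sigma.ι (fun _ : ι => regR R) i)))

/-- A module `K` is small iff `Hom_R(K,-)` commutes with direct sums. -/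
def IsSmallModule (R : Type) [Ring R] (K : RMod R) : Prop :=
  ∀ (ι : Type), PreservesColimitsOfShape (Discrete ι) (preadditiveCoyoneda.obj (op K))

/-- `M` has a short exact sequence `0 → K → P → M → 0` with `P` projective and `K`
satisfying the property `Q` (e.g. `M` is fp-Ω¹, fg-Ω¹ or small-Ω¹). -/
def IsOmega1 (R : Type) [Ring R] (Q : RMod R → Prop) (M : RMod R) : Prop :=
  ∃ (K P : RMod R) (i : K ⟶ P) (p : P ⟶ M) (w : i ≫ p = 0),
    Mono i ∧ Epi p ∧ (ShortComplex.mk i p w).Exact ∧ Projective P ∧ Q K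

/-- `M` has projective dimension at most 1. -/
def HasProjDimLE1 (R : Type) [Ring R] (M : RMod R) : Prop :=
  ∃ (P₁ P₀ : RMod R) (f : P₁ ⟶ P₀) (p : P₀ ⟶ M) (w : f ≫ p = 0),
    Projective P₁ ∧ Projective P₀ ∧ Mono f ∧ Epi p ∧ (ShortComplex.mk f p w).Exact

/-- `M` is `FP₂`: it admits a projective resolution which is finitely generated in
dimensions `0`, `1` and `2`. -/
def IsFP2 (R : Type) [Ring R] (M : RMod R) : Prop :=
  ∃ (P₂ P₁ P₀ : RMod R) (d₂ : P₂ ⟶ P₁) (d₁ : P₁ ⟶ P₀) (p : P₀ ⟶ M)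
    (w₂ : d₂ ≫ d₁ = 0) (w₁ : d₁ ≫ p = 0),
    Projective P₂ ∧ Projective P₁ ∧ Projective P₀ ∧
    Module.Finite Rᵐᵒᵖ P₂ ∧ Module.Finite Rᵐᵒᵖ P₁ ∧ Module.Finite Rᵐᵒᵖ P₀ ∧
    Epi p ∧ (ShortComplex.mk d₂ d₁ w₂).Exact ∧ (ShortComplex.mk d₁ p w₁).Exact

/-- `M` has injective dimension at most `n`, i.e. `Ext^k(-,M)` vanishes for `k > n`. -/
def HasInjDimLE (R : Type) [Ring R] (n : ℕ) (M : RMod R) : Prop :=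
  ∀ (k : ℕ), n < k → ∀ (N : RMod R), IsZero (((Ext ℤ (RMod R) k).obj (op N)).obj M)

namespace ChainComplex

variable {A : Type*} [Ring A] (K L : ChainComplex (ModuleCat A)ᵒᵖ ℕ) (n : ℕ)

/-- `x` is a cocycle representing the cohomology class `e`, for a cochain complex of modules viewed
as a chain complex in the opposite category. -/
def Represents (x : (K.X n).unop) (e : (K.homology n).unop) : Prop :=
  ∃ z : (K.opcycles n).unop, (K.pOpcycles n).unop z = x ∧ (K.homologyι n).unop z = e

variable {K n}

lemma exists_represents_of_d_eq_zero (x : (K.X n).unop) (hx : (K.d (n + 1) n).unop x = 0) :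
    ∃ e, K.Represents n x e := by
  have h : (ShortComplex.mk _ _ (K.d_pOpcycles (n + 1) n)).Exact :=
    ShortComplex.exact_of_g_is_cokernel _ (K.opcyclesIsCokernel (n + 1) n (by simp))
  obtain ⟨z, hz⟩ := (ShortComplex.moduleCat_exact_iff _).1 h.unop x hx
  exact ⟨_, z, hz, rfl⟩

lemma exists_represents (e : (K.homology n).unop) : ∃ x, K.Represents n x e := by
  obtain ⟨z, hz⟩ := (ModuleCat.epi_iff_surjective (K.homologyι n).unop).1 inferInstance e
  exact ⟨_, z, rfl, hz⟩

lemma Represents.d_eq_zero {x : (K.X n).unop} {e : (K.homology n).unop}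
    (h : K.Represents n x e) : (K.d (n + 1) n).unop x = 0 := by
  obtain ⟨z, rfl, -⟩ := h
  exact ConcreteCategory.congr_hom (congrArg Quiver.Hom.unop (K.d_pOpcycles (n + 1) n)) z

lemma Represents.exists_sub_eq {x y : (K.X (n + 1)).unop} {e : (K.homology (n + 1)).unop}
    (hx : K.Represents (n + 1) x e) (hy : K.Represents (n + 1) y e) :
    ∃ g : (K.X n).unop, x - y = (K.d (n + 1) n).unop g := by
  obtain ⟨z, rfl, hz⟩ := hx
  obtain ⟨w, rfl, hw⟩ := hy
  have h : (ShortComplex.mk _ _ (K.homologyι_comp_fromOpcycles (n + 1) n)).Exact :=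
    ShortComplex.exact_of_f_is_kernel _ (K.homologyIsKernel (n + 1) n (by simp))
  obtain ⟨g, hg⟩ := (ShortComplex.moduleCat_exact_iff _).1 h.unop (z - w)
    ((map_sub (K.homologyι (n + 1)).unop.hom z w).trans (sub_eq_zero.2 (hz.trans hw.symm)))
  refine ⟨g, (map_sub (K.pOpcycles (n + 1)).unop.hom z w).symm.trans ?_⟩
  rw [← K.p_fromOpcycles (n + 1) n]
  exact congrArg (K.pOpcycles (n + 1)).unop hg.symm

variable {L} in
lemma Represents.map {x : (K.X n).unop} {e : (K.homology n).unop}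
    (h : K.Represents n x e) (φ : L ⟶ K) :
    L.Represents n ((φ.f n).unop x) ((HomologicalComplex.homologyMap φ n).unop e) := by
  obtain ⟨z, rfl, rfl⟩ := h
  refine ⟨(HomologicalComplex.opcyclesMap φ n).unop z, ?_, ?_⟩
  · exact ConcreteCategory.congr_hom (congrArg Quiver.Hom.unop
      (HomologicalComplex.p_opcyclesMap φ n)) z
  · exact ConcreteCategory.congr_hom (congrArg Quiver.Hom.unop
      (HomologicalComplex.homologyι_naturality φ n)).symm z

end ChainComplex

namespace CategoryTheory.ProjectiveResolution

variable {A : Type*} [Ring A] {C : Type*} [Category C] [Abelian C] [Linear A C]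
  [EnoughProjectives C] {X : C} (P : ProjectiveResolution X)

variable (A) in
/-- The complex `Hom(P, Y)`, viewed as a chain complex in the opposite category of modules. -/
abbrev homComplex (Y : C) : ChainComplex (ModuleCat A)ᵒᵖ ℕ :=
  (((linearYoneda A C).obj Y).rightOp.mapHomologicalComplex _).obj P.complex

variable (A) in
/-- The map of complexes `Hom(P, Y) ⟶ Hom(P, Z)` given by `u : Y ⟶ Z`, viewed in the opposite
category. -/
abbrev homComplexMap {Y Z : C} (u : Y ⟶ Z) : P.homComplex A Z ⟶ P.homComplex A Y :=
  (NatTrans.mapHomologicalComplex (NatTrans.rightOp ((linearYoneda A C).map u)) _).app P.complex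

/-- `Extⁿ(X, Y)` is the cohomology of `Hom(P, Y)`. -/
def extIso (n : ℕ) (Y : C) :
    ((P.homComplex A Y).homology n).unop ≅ ((Ext A C n).obj (op X)).obj Y :=
  (P.isoLeftDerivedObj ((linearYoneda A C).obj Y).rightOp n).unop

lemma extIso_naturality (n : ℕ) {Y Z : C} (u : Y ⟶ Z) :
    ((Ext A C n).obj (op X)).map u ≫ (P.extIso n Z).inv = (P.extIso n Y).inv ≫
      (HomologicalComplex.homologyMap (P.homComplexMap A u) n).unop := by
  rw [Iso.comp_inv_eq, Category.assoc, Iso.eq_inv_comp]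
  have h := leftDerived_app_eq (NatTrans.rightOp ((linearYoneda A C).map u)) P n
  rw [← Category.assoc, Iso.eq_comp_inv] at h
  exact congrArg Quiver.Hom.unop h

/-- `f` is a cocycle representing the class `e` in `Extⁿ(X, Y)`. -/
def Represents (n : ℕ) {Y : C} (f : P.complex.X n ⟶ Y) (e : ((Ext A C n).obj (op X)).obj Y) :
    Prop :=
  (P.homComplex A Y).Represents n f ((P.extIso n Y).inv e)

variable {P} {n : ℕ} {Y : C}

variable (A) in
lemma exists_represents_of_d_comp_eq_zero (f : P.complex.X n ⟶ Y)
    (hf : P.complex.d (n + 1) n ≫ f = 0) :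
    ∃ e : ((Ext A C n).obj (op X)).obj Y, P.Represents n f e := by
  obtain ⟨e, he⟩ := (P.homComplex A Y).exists_represents_of_d_eq_zero f hf
  refine ⟨(P.extIso n Y).hom e, ?_⟩
  rw [Represents]
  simpa using he

lemma exists_represents (e : ((Ext A C n).obj (op X)).obj Y) : ∃ f, P.Represents n f e :=
  ChainComplex.exists_represents (K := P.homComplex A Y) ((P.extIso n Y).inv e)

lemma Represents.d_comp_eq_zero {f : P.complex.X n ⟶ Y} {e : ((Ext A C n).obj (op X)).obj Y}
    (h : P.Represents n f e) : P.complex.d (n + 1) n ≫ f = 0 :=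
  ChainComplex.Represents.d_eq_zero h

lemma Represents.exists_sub_eq {f g : P.complex.X (n + 1) ⟶ Y}
    {e : ((Ext A C (n + 1)).obj (op X)).obj Y}
    (hf : P.Represents (n + 1) f e) (hg : P.Represents (n + 1) g e) :
    ∃ k : P.complex.X n ⟶ Y, f - g = P.complex.d (n + 1) n ≫ k :=
  ChainComplex.Represents.exists_sub_eq hf hg

lemma Represents.map {f : P.complex.X n ⟶ Y} {e : ((Ext A C n).obj (op X)).obj Y}
    (h : P.Represents n f e) {Z : C} (u : Y ⟶ Z) :
    P.Represents n (f ≫ u) (((Ext A C n).obj (op X)).map u e) := by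
  have h' := ChainComplex.Represents.map h (P.homComplexMap A u)
  rw [Represents]
  convert! h' using 1
  exact ConcreteCategory.congr_hom (P.extIso_naturality n u) e

end CategoryTheory.ProjectiveResolution

namespace CategoryTheory.ProjectiveResolution

variable {C : Type*} [Category C] [Abelian C]

lemma exists_kernel_desc {X Y : C} (P : ProjectiveResolution X) (f : P.complex.X 1 ⟶ Y)
    (hf : P.complex.d 2 1 ≫ f = 0) :
    ∃ f' : kernel (P.π.f 0) ⟶ Y,
      kernel.lift (P.π.f 0) (P.complex.d 1 0) P.complex_d_comp_π_f_zero ≫ f' = f := by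
  let d : P.complex.X 1 ⟶ kernel (P.π.f 0) :=
    kernel.lift (P.π.f 0) (P.complex.d 1 0) P.complex_d_comp_π_f_zero
  have : Epi d := P.exact₀.epi_kernelLift
  have hd : d ≫ kernel.ι (P.π.f 0) = P.complex.d 1 0 := kernel.lift_ι _ _ _
  let S : ShortComplex C := ShortComplex.mk (P.complex.d 2 1) d
    (by rw [← cancel_mono (kernel.ι (P.π.f 0)), Category.assoc, hd, zero_comp,
      P.complex.d_comp_d])
  have hex : S.Exact := (ShortComplex.exact_iff_of_epi_of_isIso_of_mono
    ({ τ₁ := 𝟙 _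
       τ₂ := 𝟙 _
       τ₃ := kernel.ι (P.π.f 0)
       comm₂₃ := (Category.id_comp _).trans hd.symm } :
      S ⟶ ShortComplex.mk (P.complex.d 2 1) (P.complex.d 1 0)
        (P.complex.d_comp_d _ _ _))).2 (P.exact_succ 0)
  have : Epi S.g := ‹Epi d›
  exact ⟨hex.desc f hf, hex.g_desc f hf⟩

end CategoryTheory.ProjectiveResolution

namespace CategoryTheory.ShortComplex

/-- The class of an extension of `S.X₃` by `S.X₁` with projective middle term is in the image of
`Ext¹(S.X₃, u)` only if the identity of `S.X₁` factors through `u`, up to a morphism factoring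
through `S.f`. -/
lemma exists_ext_class_lifting (A : Type*) [Ring A] {C : Type*} [Category C] [Abelian C]
    [Linear A C] [EnoughProjectives C] (S : ShortComplex C) (hS : S.ShortExact)
    [Projective S.X₂] :
    ∃ e : ((Ext A C 1).obj (Opposite.op S.X₃)).obj S.X₁, ∀ ⦃Y : C⦄ (u : Y ⟶ S.X₁)
      (y : ((Ext A C 1).obj (Opposite.op S.X₃)).obj Y),
      ((Ext A C 1).obj (Opposite.op S.X₃)).map u y = e →
        ∃ (s : S.X₁ ⟶ Y) (r : S.X₂ ⟶ S.X₁), 𝟙 S.X₁ = s ≫ u + S.f ≫ r := by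
  have := hS.mono_f
  have := hS.epi_g
  let P := ProjectiveResolution.of S.X₃
  let π : P.complex.X 0 ⟶ S.X₃ := P.π.f 0
  have hdπ : P.complex.d 1 0 ≫ π = 0 := P.complex_d_comp_π_f_zero
  have : Epi π := inferInstanceAs (Epi (P.π.f 0))
  obtain ⟨a, ha⟩ : ∃ a : S.X₂ ⟶ P.complex.X 0, a ≫ π = S.g :=
    ⟨Projective.factorThru S.g π, by simp⟩
  obtain ⟨b, hb⟩ : ∃ b : P.complex.X 0 ⟶ S.X₂, b ≫ S.g = π :=
    ⟨Projective.factorThru π S.g, by simp⟩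
  let φ : kernel π ⟶ S.X₁ := hS.exact.lift (kernel.ι π ≫ b) (by simp [hb])
  have hφ : φ ≫ S.f = kernel.ι π ≫ b := hS.exact.lift_f _ _
  let d : P.complex.X 1 ⟶ kernel π := kernel.lift π (P.complex.d 1 0) hdπ
  have : Epi d := P.exact₀.epi_kernelLift
  have hd : d ≫ kernel.ι π = P.complex.d 1 0 := kernel.lift_ι _ _ _
  obtain ⟨e, he⟩ := ProjectiveResolution.exists_represents_of_d_comp_eq_zero A (d ≫ φ)
    (by rw [← cancel_mono S.f]; simp [hφ, reassoc_of% hd])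
  refine ⟨e, fun Y u y hy ↦ ?_⟩
  obtain ⟨f, hf⟩ := ProjectiveResolution.exists_represents (P := P) y
  obtain ⟨g, hg⟩ := he.exists_sub_eq (hy ▸ hf.map u)
  obtain ⟨f', hf'⟩ : ∃ f' : kernel π ⟶ Y, d ≫ f' = f :=
    P.exists_kernel_desc f hf.d_comp_eq_zero
  have hfg : φ = f' ≫ u + kernel.ι π ≫ g := by
    rw [← sub_eq_iff_eq_add', ← cancel_epi d]
    simp [reassoc_of% hd, reassoc_of% hf', ← hg]
  let t : S.X₁ ⟶ kernel π := kernel.lift π (S.f ≫ a) (by simp [ha])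
  have ht : t ≫ kernel.ι π = S.f ≫ a := kernel.lift_ι _ _ _
  let r : S.X₂ ⟶ S.X₁ := hS.exact.lift (𝟙 _ - a ≫ b) (by simp [ha, hb])
  have hr : r ≫ S.f = 𝟙 _ - a ≫ b := hS.exact.lift_f _ _
  refine ⟨t ≫ f', a ≫ g + r, ?_⟩
  have : t ≫ φ = 𝟙 _ - S.f ≫ r := by
    rw [← cancel_mono S.f]
    simp [hφ, reassoc_of% ht, hr]
  rw [eq_sub_iff_add_eq.1 this |>.symm, hfg]
  simp [reassoc_of% ht, add_assoc]

/-- If `F` is projective and `Ext¹(M, -)` preserves a filtered colimit presentation of the kernel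
of an epimorphism `F ⟶ M` along which morphisms from `F` lift, then this kernel is a retract of a
term of the presentation. -/
lemma exists_section_of_isColimit (A : Type*) [Ring A] {C : Type*} [Category C] [Abelian C]
    [Linear A C] [EnoughProjectives C] {J : Type*} [Category J] [IsFiltered J] {D : J ⥤ C}
    {c : Cocone D} (hc : IsColimit c) {F M : C} [Projective F] {f : c.pt ⟶ F} {g : F ⟶ M}
    {w : f ≫ g = 0} (hS : (ShortComplex.mk f g w).ShortExact)
    [PreservesColimit D ((Ext A C 1).obj (Opposite.op M))]
    [PreservesColimit (D ⋙ (Ext A C 1).obj (Opposite.op M)) (forget (ModuleCat A))]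
    (hlift : ∀ (i : J) (k : F ⟶ c.pt), ∃ (j : J) (_ : i ⟶ j) (l : F ⟶ D.obj j),
      l ≫ c.ι.app j = k) :
    ∃ (j : J) (s : c.pt ⟶ D.obj j), s ≫ c.ι.app j = 𝟙 c.pt := by
  have : Projective (ShortComplex.mk f g w).X₂ := ‹Projective F›
  obtain ⟨e, he⟩ := exists_ext_class_lifting A _ hS
  obtain ⟨i, y, hy⟩ := Concrete.isColimit_exists_rep _
    (isColimitOfPreserves ((Ext A C 1).obj (Opposite.op M)) hc) e
  obtain ⟨s, r, hr⟩ := he (c.ι.app i) y hy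
  obtain ⟨j, a, l, hl⟩ := hlift i r
  refine ⟨j, s ≫ D.map a + f ≫ l, ?_⟩
  simpa [hl] using hr.symm

end CategoryTheory.ShortComplex

namespace ModuleCat

variable {A : Type} [Ring A]

/-- A criterion for a cocone over a small filtered diagram of modules to be colimiting. -/
def isColimitOfFiltered {J : Type} [SmallCategory J] [IsFiltered J] {D : J ⥤ ModuleCat.{0} A}
    (c : Cocone D) (hsurj : ∀ x : c.pt, ∃ i, ∃ y : D.obj i, x = c.ι.app i y)
    (hinj : ∀ i (x : D.obj i), c.ι.app i x = 0 → ∃ (k : J) (f : i ⟶ k), D.map f x = 0) :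
    IsColimit c :=
  have := reflectsColimitsOfShape_of_reflectsIsomorphisms (J := J) (G := forget (ModuleCat.{0} A))
  isColimitOfReflects (forget (ModuleCat A)) <|
    Types.FilteredColimit.isColimitOf' _ _ hsurj fun i x y hxy ↦ by
      obtain ⟨k, f, hf⟩ := hinj i (x - y) ((map_sub (c.ι.app i).hom x y).trans (sub_eq_zero.2 hxy))
      exact ⟨k, f, sub_eq_zero.1 ((map_sub (D.map f).hom x y).symm.trans hf)⟩

variable (N : ModuleCat.{0} A)

lemma exists_epi_projective_finite [Module.Finite A N] :
    ∃ (F : ModuleCat.{0} A) (p : F ⟶ N), Epi p ∧ Projective F ∧ Module.Finite A F := by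
  obtain ⟨n, p, hp⟩ := Module.Finite.exists_fin' A N
  exact ⟨of A (Fin n → A), ofHom p, (epi_iff_surjective _).2 hp,
    (IsProjective.iff_projective _).1 inferInstance, inferInstanceAs (Module.Finite A (Fin n → A))⟩

/-- The direct system of finitely generated submodules of `N`. -/
def fgSubmodules : {L : Submodule A N // L.FG} ⥤ ModuleCat.{0} A where
  obj L := of A L.1
  map f := ofHom (Submodule.inclusion (leOfHom f))

/-- `N` as a cocone over the direct system of its finitely generated submodules. -/
def fgSubmodulesCocone : Cocone N.fgSubmodules where
  pt := N
  ι := { app L := ofHom L.1.subtype }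

instance : IsDirectedOrder {L : Submodule A N // L.FG} :=
  ⟨fun L L' ↦ ⟨⟨L.1 ⊔ L'.1, L.2.sup L'.2⟩, le_sup_left, le_sup_right⟩⟩

instance : Nonempty {L : Submodule A N // L.FG} := ⟨⟨⊥, Submodule.fg_bot⟩⟩

/-- A module is the direct limit of its finitely generated submodules. -/
def isColimitFgSubmodulesCocone : IsColimit N.fgSubmodulesCocone :=
  isColimitOfFiltered _
    (fun x ↦ ⟨⟨A ∙ x, Submodule.fg_span_singleton x⟩,
      ⟨x, Submodule.mem_span_singleton_self x⟩, rfl⟩)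
    (fun i _ hx ↦ ⟨i, 𝟙 i, Subtype.ext hx⟩)

variable {N} {F : ModuleCat.{0} A} (p : F ⟶ N)

/-- The direct system of the quotients of `F` by finitely generated submodules of the kernel of
`p : F ⟶ N`. -/
def fgQuotients : {L : Submodule A F // L.FG ∧ L ≤ LinearMap.ker p.hom} ⥤ ModuleCat.{0} A where
  obj L := of A (F ⧸ L.1)
  map f := ofHom (Submodule.factor (leOfHom f))
  map_id _ := by ext; rfl
  map_comp _ _ := by ext; rfl

/-- `N` as a cocone over the direct system of the quotients of `F` by finitely generated submodules
of the kernel of `p : F ⟶ N`. -/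
def fgQuotientsCocone : Cocone (fgQuotients p) where
  pt := N
  ι :=
    { app L := ofHom (L.1.liftQ p.hom L.2.2)
      naturality _ _ _ := hom_ext (Submodule.linearMap_qext _ rfl) }

instance : IsDirectedOrder {L : Submodule A F // L.FG ∧ L ≤ LinearMap.ker p.hom} :=
  ⟨fun L L' ↦ ⟨⟨L.1 ⊔ L'.1, L.2.1.sup L'.2.1, sup_le L.2.2 L'.2.2⟩,
    (le_sup_left : L.1 ≤ _), (le_sup_right : L'.1 ≤ _)⟩⟩

instance : Nonempty {L : Submodule A F // L.FG ∧ L ≤ LinearMap.ker p.hom} :=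
  ⟨⟨⊥, Submodule.fg_bot, bot_le⟩⟩

/-- If `p : F ⟶ N` is an epimorphism, then `N` is the direct limit of the quotients of `F` by
finitely generated submodules of the kernel of `p`. -/
def isColimitFgQuotientsCocone [Epi p] : IsColimit (fgQuotientsCocone p) :=
  isColimitOfFiltered _
    (fun x ↦ by
      obtain ⟨y, rfl⟩ := (epi_iff_surjective p).1 inferInstance x
      exact ⟨⟨⊥, Submodule.fg_bot, bot_le⟩, Submodule.Quotient.mk y, rfl⟩)
    (fun i x hx ↦ by
      obtain ⟨y, rfl⟩ := Submodule.Quotient.mk_surjective _ x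
      refine ⟨⟨i.1 ⊔ A ∙ y, i.2.1.sup (Submodule.fg_span_singleton y),
        sup_le i.2.2 ((Submodule.span_singleton_le_iff_mem _ _).2 hx)⟩,
        homOfLE (le_sup_left : i.1 ≤ _), ?_⟩
      exact (Submodule.Quotient.mk_eq_zero _).2
        ((le_sup_right : _ ≤ i.1 ⊔ A ∙ y) (Submodule.mem_span_singleton_self y)))

end ModuleCat

lemma Module.FinitePresentation.of_comp_eq_id {A N Q : Type*} [Ring A] [AddCommGroup N] [Module A N]
    [AddCommGroup Q] [Module A Q] [Module.FinitePresentation A Q] (f : Q →ₗ[A] N) (g : N →ₗ[A] Q)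
    (h : f ∘ₗ g = LinearMap.id) : Module.FinitePresentation A N :=
  Module.finitePresentation_of_surjective f
    (Function.LeftInverse.surjective (DFunLike.congr_fun h))
    (LinearMap.ker_eq_range_of_comp_eq_id h ▸ Submodule.FG.of_finite)

namespace CommutesWithDirectLimits

variable {R : Type} [Ring R] {S : ShortComplex (RMod R)}

lemma finite_of_shortExact (h : CommutesWithDirectLimits R S.X₃)
    (hS : S.ShortExact) [Projective S.X₂] [Module.Finite Rᵐᵒᵖ S.X₂] :
    Module.Finite Rᵐᵒᵖ S.X₁ := by
  have := h {L : Submodule Rᵐᵒᵖ S.X₁ // L.FG}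
  have hlift (i : {L : Submodule Rᵐᵒᵖ S.X₁ // L.FG}) (k : S.X₂ ⟶ S.X₁) :
      ∃ (j : _) (_ : i ⟶ j) (l : S.X₂ ⟶ S.X₁.fgSubmodules.obj j),
        l ≫ S.X₁.fgSubmodulesCocone.ι.app j = k :=
    have hk : (LinearMap.range k.hom).FG := Module.Finite.iff_fg.1 inferInstance
    ⟨⟨i.1 ⊔ LinearMap.range k.hom, i.2.sup hk⟩, homOfLE (le_sup_left : i.1 ≤ _),
      ModuleCat.ofHom (k.hom.codRestrict (i.1 ⊔ LinearMap.range k.hom) fun x ↦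
        (le_sup_right : _ ≤ i.1 ⊔ _) (LinearMap.mem_range_self k.hom x)), rfl⟩
  obtain ⟨j, s, hs⟩ := ShortComplex.exists_section_of_isColimit ℤ
    S.X₁.isColimitFgSubmodulesCocone (f := S.f) (g := S.g) (w := S.zero) hS hlift
  have : Module.Finite Rᵐᵒᵖ j.1 := Module.Finite.iff_fg.2 j.2
  exact Module.Finite.of_surjective j.1.subtype fun x ↦ ⟨s x, ConcreteCategory.congr_hom hs x⟩

lemma finitePresentation_of_shortExact (h : CommutesWithDirectLimits R S.X₃) (hS : S.ShortExact)
    [Projective S.X₂] [Module.Finite Rᵐᵒᵖ S.X₂] : Module.FinitePresentation Rᵐᵒᵖ S.X₁ := by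
  have := h.finite_of_shortExact hS
  obtain ⟨F, q, hq, hF, hfin⟩ := ModuleCat.exists_epi_projective_finite S.X₁
  have := h {L : Submodule Rᵐᵒᵖ F // L.FG ∧ L ≤ LinearMap.ker q.hom}
  have hepi (i) : Epi ((ModuleCat.fgQuotientsCocone q).ι.app i) := by
    refine (ModuleCat.epi_iff_surjective _).2 fun x ↦ ?_
    obtain ⟨y, rfl⟩ := (ModuleCat.epi_iff_surjective q).1 hq x
    exact ⟨Submodule.Quotient.mk y, rfl⟩
  obtain ⟨j, s, hs⟩ := ShortComplex.exists_section_of_isColimit ℤ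
    (ModuleCat.isColimitFgQuotientsCocone q) (f := S.f) (g := S.g) (w := S.zero) hS fun i k ↦
      ⟨i, 𝟙 i, Projective.factorThru k _, Projective.factorThru_comp _ _⟩
  have := Module.finitePresentation_of_projective Rᵐᵒᵖ F
  have : Module.FinitePresentation Rᵐᵒᵖ (F ⧸ j.1) :=
    Module.finitePresentation_of_surjective j.1.mkQ j.1.mkQ_surjective (by simpa using j.2.1)
  exact .of_comp_eq_id (j.1.liftQ q.hom j.2.2) s.hom (congrArg ModuleCat.Hom.hom hs)

end CommutesWithDirectLimits

theorem fg_ext1_commutes_with_direct_limits_implies_fpOmega1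
    (R : Type) [Ring R] (M : RMod R) (hfg : Module.Finite Rᵐᵒᵖ M)
    (h : CommutesWithDirectLimits R M) :
    IsOmega1 R (fun K => Module.FinitePresentation Rᵐᵒᵖ K) M := by
  obtain ⟨F, p, hp, hF, hfin⟩ := ModuleCat.exists_epi_projective_finite M
  have hex := ShortComplex.exact_kernel p
  refine ⟨kernel p, F, kernel.ι p, p, kernel.condition p, inferInstance, hp, hex, hF, ?_⟩
  exact CommutesWithDirectLimits.finitePresentation_of_shortExact
    (S := ShortComplex.mk _ _ (kernel.condition p)) h { exact := hex }
end
end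

section
/- Let M be a right R-module of projective dimension at most 1. The following are equivalent: (1) M is an fp-Ω¹-module; (2) there is a projective module L such that M ⊕ L is a direct sum of an FP₂-module and a projective module; (3) Ext¹_R(M, −) commutes with direct limits; (4) Ext¹_R(M, −) commutes with direct sums of copies of R. -/
open CategoryTheory CategoryTheory.Limits Opposite

noncomputable section

universe v u

section OppositeHomology

variable {A : Type u} [Ring A]

/-- The cochain `z` is a cocycle representing the cohomology class `e`. -/
def RepresentsClass (L : ChainComplex (ModuleCat.{v} A)ᵒᵖ ℕ) (z : (L.X 1).unop)
    (e : (L.homology 1).unop) : Prop :=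
  ∃ c : (L.opcycles 1).unop, (L.pOpcycles 1).unop c = z ∧ (L.homologyι 1).unop c = e

variable (L : ChainComplex (ModuleCat.{v} A)ᵒᵖ ℕ)

lemma RepresentsClass.add {z z' : (L.X 1).unop} {e e' : (L.homology 1).unop}
    (h : RepresentsClass L z e) (h' : RepresentsClass L z' e') :
    RepresentsClass L (z + z') (e + e') := by
  obtain ⟨c, rfl, rfl⟩ := h
  obtain ⟨c', rfl, rfl⟩ := h'
  exact ⟨c + c', by simp, by simp⟩

lemma RepresentsClass.sub {z z' : (L.X 1).unop} {e e' : (L.homology 1).unop}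
    (h : RepresentsClass L z e) (h' : RepresentsClass L z' e') :
    RepresentsClass L (z - z') (e - e') := by
  obtain ⟨c, rfl, rfl⟩ := h
  obtain ⟨c', rfl, rfl⟩ := h'
  exact ⟨c - c', by simp, by simp⟩

lemma exists_representsClass_of_cocycle (z : (L.X 1).unop) (hz : (L.d 2 1).unop z = 0) :
    ∃ e, RepresentsClass L z e := by
  have hex : (ShortComplex.mk (L.d 2 1) (L.pOpcycles 1) (by simp)).Exact :=
    ShortComplex.exact_of_g_is_cokernel _ (L.opcyclesIsCokernel 2 1 (by simp))
  obtain ⟨c, hc⟩ := (ShortComplex.moduleCat_exact_iff _).1 hex.unop z hz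
  exact ⟨_, c, hc, rfl⟩

lemma exists_cocycle_representsClass (e : (L.homology 1).unop) :
    ∃ z, (L.d 2 1).unop z = 0 ∧ RepresentsClass L z e := by
  obtain ⟨c, rfl⟩ := (ModuleCat.epi_iff_surjective (L.homologyι 1).unop).1 inferInstance e
  refine ⟨_, ?_, c, rfl, rfl⟩
  rw [← ModuleCat.comp_apply, ← unop_comp, L.d_pOpcycles]
  rfl

lemma RepresentsClass.eq_zero_iff {z : (L.X 1).unop} {e : (L.homology 1).unop}
    (h : RepresentsClass L z e) : e = 0 ↔ ∃ y, (L.d 1 0).unop y = z := by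
  obtain ⟨c, rfl, rfl⟩ := h
  have hp : Function.Injective (L.pOpcycles 1).unop :=
    (ModuleCat.mono_iff_injective _).1 inferInstance
  have hd : ∀ y, (L.pOpcycles 1).unop ((L.fromOpcycles 1 0).unop y) = (L.d 1 0).unop y := by
    intro y
    rw [← ModuleCat.comp_apply, ← unop_comp, L.p_fromOpcycles]
  have hex : (ShortComplex.mk (L.homologyι 1) (L.fromOpcycles 1 0) (by simp)).Exact :=
    ShortComplex.exact_of_f_is_kernel _ (L.homologyIsKernel 1 0 (by simp))
  constructor
  · intro hc
    obtain ⟨y, hy⟩ := (ShortComplex.moduleCat_exact_iff _).1 hex.unop c hc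
    refine ⟨y, ?_⟩
    exact (hd y).symm.trans (congrArg _ hy)
  · rintro ⟨y, hy⟩
    rw [← hd] at hy
    rw [← hp hy, ← ModuleCat.comp_apply, ← unop_comp, L.homologyι_comp_fromOpcycles]
    rfl

lemma RepresentsClass.map {L L' : ChainComplex (ModuleCat.{v} A)ᵒᵖ ℕ} (φ : L ⟶ L')
    {z : (L'.X 1).unop} {e : (L'.homology 1).unop} (h : RepresentsClass L' z e) :
    RepresentsClass L ((φ.f 1).unop z) ((HomologicalComplex.homologyMap φ 1).unop e) := by
  obtain ⟨c, rfl, rfl⟩ := h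
  refine ⟨(HomologicalComplex.opcyclesMap φ 1).unop c, ?_, ?_⟩
  · rw [← ModuleCat.comp_apply, ← ModuleCat.comp_apply, ← unop_comp, ← unop_comp,
      HomologicalComplex.p_opcyclesMap]
  · rw [← ModuleCat.comp_apply, ← ModuleCat.comp_apply, ← unop_comp, ← unop_comp,
      HomologicalComplex.homologyι_naturality]

end OppositeHomology

section ExtClass

variable {A : Type*} [Ring A] {C : Type*} [Category* C] [Abelian C] [Linear A C]
  [EnoughProjectives C]

/-- Cocycles on a projective resolution represent classes in `Ext¹`. -/
lemma exists_cocycle_relation {M : C} (Q : ProjectiveResolution M) :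
    ∃ Rep : ∀ N : C, (Q.complex.X 1 ⟶ N) → (((Ext A C 1).obj (op M)).obj N) → Prop,
      (∀ N z z' e e', Rep N z e → Rep N z' e' → Rep N (z + z') (e + e')) ∧
      (∀ N z z' e e', Rep N z e → Rep N z' e' → Rep N (z - z') (e - e')) ∧
      (∀ N z, Q.complex.d 2 1 ≫ z = 0 → ∃ e, Rep N z e) ∧
      (∀ N e, ∃ z, Q.complex.d 2 1 ≫ z = 0 ∧ Rep N z e) ∧
      (∀ N z e, Rep N z e → (e = 0 ↔ ∃ y, Q.complex.d 1 0 ≫ y = z)) ∧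
      (∀ N N' (g : N ⟶ N') z e, Rep N z e →
        Rep N' (z ≫ g) (((Ext A C 1).obj (op M)).map g e)) := by
  let F : C → C ⥤ (ModuleCat A)ᵒᵖ := fun N ↦ ((linearYoneda A C).obj N).rightOp
  let L : C → ChainComplex (ModuleCat A)ᵒᵖ ℕ := fun N ↦
    ((F N).mapHomologicalComplex _).obj Q.complex
  let ε : ∀ N, ((Ext A C 1).obj (op M)).obj N ≅ ((L N).homology 1).unop := fun N ↦
    (Q.isoLeftDerivedObj (F N) 1).unop.symm
  refine ⟨fun N z e ↦ RepresentsClass (L N) z ((ε N).hom e), ?_, ?_, ?_, ?_, ?_, ?_⟩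
  · intro N z z' e e' h h'
    rw [map_add]
    exact h.add _ h'
  · intro N z z' e e' h h'
    rw [map_sub]
    exact h.sub _ h'
  · intro N z hz
    obtain ⟨e, he⟩ := exists_representsClass_of_cocycle (L N) z hz
    refine ⟨(ε N).inv e, ?_⟩
    simpa using he
  · intro N e
    exact exists_cocycle_representsClass (L N) ((ε N).hom e)
  · intro N z e h
    refine Iff.trans ?_ h.eq_zero_iff
    rw [map_eq_zero_iff]
    exact (ModuleCat.mono_iff_injective _).1 inferInstance
  · intro N N' g z e h
    let α : F N' ⟶ F N := NatTrans.rightOp ((linearYoneda A C).map g)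
    have key := ProjectiveResolution.leftDerived_app_eq α Q 1
    have h2 := RepresentsClass.map ((NatTrans.mapHomologicalComplex α _).app Q.complex) h
    have hmap : ((Ext A C 1).obj (op M)).map g ≫ (ε N').hom = (ε N).hom ≫
        (HomologicalComplex.homologyMap
          ((NatTrans.mapHomologicalComplex α _).app Q.complex) 1).unop := by
      have h3 := congrArg (fun f ↦ ((Q.isoLeftDerivedObj (F N') 1).inv ≫ f).unop) key
      refine Eq.trans h3 ?_
      rw [Iso.inv_hom_id_assoc]
      rfl
    have : (ε N').hom (((Ext A C 1).obj (op M)).map g e) =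
       (HomologicalComplex.homologyMap ((NatTrans.mapHomologicalComplex α _).app Q.complex) 1).unop
        ((ε N).hom e) := by
      exact congrArg (fun f ↦ f e) hmap
    rw [this]
    exact h2

/-- A short exact sequence `0 → K → P → M → 0` with `P` projective presents `Ext¹(M, N)` as the
cokernel of `Hom(P, N) → Hom(K, N)`, naturally in `N`. -/
theorem exists_connecting_map {K P M : C} (i : K ⟶ P) (p : P ⟶ M) (w : i ≫ p = 0) [Mono i] [Epi p]
    (hex : (ShortComplex.mk i p w).Exact) [Projective P] :
    ∃ δ : ∀ N : C, (K ⟶ N) → (((Ext A C 1).obj (op M)).obj N),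
      (∀ N f g, δ N (f + g) = δ N f + δ N g) ∧
      (∀ N f g, δ N (f - g) = δ N f - δ N g) ∧
      (∀ N, Function.Surjective (δ N)) ∧
      (∀ N f, δ N f = 0 ↔ ∃ h, i ≫ h = f) ∧
      (∀ N N' (g : N ⟶ N') f, ((Ext A C 1).obj (op M)).map g (δ N f) = δ N' (f ≫ g)) := by
  let Q := projectiveResolution M
  obtain ⟨Rep, hadd, hsub, hex_class, hex_coc, hzero, hmap⟩ :=
    exists_cocycle_relation (A := A) Q
  have huniq : ∀ N z e e', Rep N z e → Rep N z e' → e = e' := by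
    intro N z e e' h h'
    have := (hzero N _ _ (hsub N _ _ _ _ h h')).2 ⟨0, by simp⟩
    exact sub_eq_zero.1 this
  let q := Q.complex.pOpcycles 1
  let d := Q.complex.fromOpcycles 1 0
  have hqd : q ≫ d = Q.complex.d 1 0 := Q.complex.p_fromOpcycles 1 0
  obtain ⟨π, hπ, hdπ₀, hQ₀⟩ : ∃ (π : Q.complex.X 0 ⟶ M) (_ : Epi π)
      (h : Q.complex.d 1 0 ≫ π = 0), (ShortComplex.mk _ _ h).Exact :=
    ⟨Q.π.f 0, inferInstanceAs (Epi (Q.π.f 0)), Q.complex_d_comp_π_f_zero, Q.exact₀⟩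
  have hdπ : d ≫ π = 0 := by
    rw [← cancel_epi q, ← Category.assoc, hqd, hdπ₀, comp_zero]
  have : Mono d := by
    refine Preadditive.mono_of_cancel_zero _ fun g hg ↦ ?_
    obtain ⟨l, hl⟩ := KernelFork.IsLimit.lift' (Q.complex.homologyIsKernel 1 0 (by simp)) g hg
    rw [← hl, (Q.complex_exactAt_succ 0).isZero_homology.eq_of_tgt l 0, zero_comp]
  have hQ : (ShortComplex.mk d π hdπ).Exact := by
    let ψ : ShortComplex.mk _ _ hdπ₀ ⟶ ShortComplex.mk d π hdπ :=
      { τ₁ := q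
        τ₂ := 𝟙 _
        τ₃ := 𝟙 _
        comm₁₂ := by simp [hqd]
        comm₂₃ := by simp }
    have : Epi ψ.τ₁ := inferInstanceAs (Epi (Q.complex.pOpcycles 1))
    have : IsIso ψ.τ₂ := inferInstanceAs (IsIso (𝟙 _))
    have : Mono ψ.τ₃ := inferInstanceAs (Mono (𝟙 _))
    exact (ShortComplex.exact_iff_of_epi_of_isIso_of_mono ψ).1 hQ₀
  have : Projective (Q.complex.X 0) := Q.projective 0
  let a : Q.complex.X 0 ⟶ P := Projective.factorThru π p
  have ha : a ≫ p = π := Projective.factorThru_comp _ _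
  let a' : P ⟶ Q.complex.X 0 := Projective.factorThru p π
  have ha' : a' ≫ π = p := Projective.factorThru_comp _ _
  let b : Q.complex.opcycles 1 ⟶ K := hex.lift (d ≫ a) (by simp [ha, hdπ])
  have hb : b ≫ i = d ≫ a := hex.lift_f _ _
  let φ : K ⟶ Q.complex.opcycles 1 := hQ.lift (i ≫ a') (by simp [ha', w])
  have hφ : φ ≫ d = i ≫ a' := hQ.lift_f _ _
  let s : Q.complex.X 0 ⟶ Q.complex.opcycles 1 := hQ.lift (a ≫ a' - 𝟙 _) (by simp [ha, ha'])
  have hs : s ≫ d = a ≫ a' - 𝟙 _ := hQ.lift_f _ _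
  let t : P ⟶ K := hex.lift (a' ≫ a - 𝟙 _) (by simp [ha, ha'])
  have ht : t ≫ i = a' ≫ a - 𝟙 _ := hex.lift_f _ _
  have hbφ : b ≫ φ = 𝟙 _ + d ≫ s := by
    rw [← cancel_mono d]
    simp [hφ, hs, reassoc_of% hb]
  have hφb : φ ≫ b = 𝟙 _ + i ≫ t := by
    rw [← cancel_mono i]
    simp [hb, ht, reassoc_of% hφ]
  have hdq : Q.complex.d 2 1 ≫ q = 0 := Q.complex.d_pOpcycles 2 1
  choose δ hδ using fun N (f : K ⟶ N) ↦ hex_class N (q ≫ b ≫ f) (by simp [reassoc_of% hdq])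
  refine ⟨δ, ?_, ?_, ?_, ?_, ?_⟩
  · intro N f g
    refine huniq N _ _ _ (hδ N _) ?_
    simpa using hadd N _ _ _ _ (hδ N f) (hδ N g)
  · intro N f g
    refine huniq N _ _ _ (hδ N _) ?_
    simpa using hsub N _ _ _ _ (hδ N f) (hδ N g)
  · intro N e
    obtain ⟨z, hz, he⟩ := hex_coc N e
    let z' : Q.complex.opcycles 1 ⟶ N := Q.complex.descOpcycles z 2 (by simp) hz
    have hz' : q ≫ z' = z := Q.complex.p_descOpcycles _ _ _ _
    refine ⟨φ ≫ z', sub_eq_zero.1 ((hzero N _ _ (hsub N _ _ _ _ (hδ N _) he)).2 ⟨s ≫ z', ?_⟩)⟩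
    rw [← hqd, ← hz', reassoc_of% hbφ]
    simp
  · intro N f
    rw [hzero N _ _ (hδ N f)]
    constructor
    · rintro ⟨h, hh⟩
      have hh' : d ≫ h = b ≫ f := by
        rw [← cancel_epi q, ← hh, ← hqd, Category.assoc]
      refine ⟨a' ≫ h - t ≫ f, ?_⟩
      rw [Preadditive.comp_sub, ← reassoc_of% hφ, hh', reassoc_of% hφb]
      simp
    · rintro ⟨h, rfl⟩
      exact ⟨a ≫ h, by rw [← hqd, reassoc_of% hb]; simp⟩
  · intro N N' g f
    refine huniq N' _ _ _ ?_ (hδ N' _)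
    simpa using hmap N N' g _ _ (hδ N f)

end ExtClass

section Modules

variable {A : Type*} [Ring A]

/-- The kernel of a surjection between projective modules is projective. -/
lemma projective_ker_of_surjective {P Q : Type*} [AddCommGroup P] [Module A P] [AddCommGroup Q]
    [Module A Q] [Module.Projective A P] [Module.Projective A Q] (f : P →ₗ[A] Q)
    (hf : Function.Surjective f) : Module.Projective A (LinearMap.ker f) := by
  obtain ⟨s, hs⟩ := Module.projective_lifting_property f LinearMap.id hf
  have hs' : ∀ x, f (s x) = x := fun x ↦ LinearMap.congr_fun hs x
  refine Module.Projective.of_split (LinearMap.ker f).subtype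
    (LinearMap.codRestrict _ (LinearMap.id - s ∘ₗ f) fun x ↦ by simp [hs']) ?_
  ext x
  have hx : f x = 0 := x.2
  simp [hx]

/-- The endomorphism of a free module which kills the coordinates in `J`. -/
def killCoords (A : Type*) [Ring A] {I : Type*} (J : Set I) : (I →₀ A) →ₗ[A] (I →₀ A) :=
  open Classical in LinearMap.id - (Finsupp.supported A A J).subtype ∘ₗ Finsupp.restrictDom A A J

lemma killCoords_apply {I : Type*} (J : Set I) [DecidablePred (· ∈ J)] (x : I →₀ A) (j : I) :
    killCoords A J x j = if j ∈ J then 0 else x j := by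
  simp only [killCoords, LinearMap.sub_apply, LinearMap.id_apply, LinearMap.comp_apply,
    Submodule.subtype_apply, Finsupp.restrictDom_apply, Finsupp.sub_apply, Finsupp.filter_apply]
  split_ifs <;> simp

lemma killCoords_eq_zero_iff {I : Type*} (J : Set I) (x : I →₀ A) :
    killCoords A J x = 0 ↔ x ∈ Finsupp.supported A A J := by
  classical
  rw [Finsupp.mem_supported', Finsupp.ext_iff]
  simp [killCoords_apply]

lemma killCoords_killCoords {I : Type*} (J : Set I) (x : I →₀ A) :
    killCoords A J (killCoords A J x) = killCoords A J x := by
  classical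
  ext j
  simp +contextual [killCoords_apply]

lemma finitePresentation_supported {I : Type*} (J : Set I) (hJ : J.Finite) :
    Module.FinitePresentation A (Finsupp.supported A A J) :=
  have := hJ.to_subtype
  Module.FinitePresentation.of_equiv (R := A) (M := J →₀ A)
    (N := Finsupp.supported A A J) (Finsupp.supportedEquivFinsupp J).symm

lemma exists_finite_range_le_supported {I K : Type*} [AddCommGroup K] [Module A K]
    [Module.Finite A K] (f : K →ₗ[A] (I →₀ A)) :
    ∃ J : Set I, J.Finite ∧ ∀ x, f x ∈ Finsupp.supported A A J := by
  classical
  obtain ⟨S, hS⟩ := Module.Finite.fg_top (R := A) (M := K)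
  refine ⟨S.biUnion fun x ↦ (f x).support, Finset.finite_toSet _, fun x ↦ ?_⟩
  have : (⊤ : Submodule A K) ≤ (Finsupp.supported A A
      ((S.biUnion fun x ↦ (f x).support : Finset I) : Set I)).comap f := by
    rw [← hS, Submodule.span_le]
    intro y hy
    exact Finset.coe_subset.2 (Finset.subset_biUnion_of_mem (fun x ↦ (f x).support) hy)
  exact this trivial

/-- Surjections with the same kernel have isomorphic targets. -/
lemma nonempty_linearEquiv_of_ker_eq {F X Y : Type*} [AddCommGroup F] [Module A F]
    [AddCommGroup X] [Module A X] [AddCommGroup Y] [Module A Y] (f : F →ₗ[A] X) (g : F →ₗ[A] Y)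
    (hf : Function.Surjective f) (hg : Function.Surjective g)
    (h : LinearMap.ker f = LinearMap.ker g) : Nonempty (X ≃ₗ[A] Y) :=
  ⟨(f.quotKerEquivOfSurjective hf).symm ≪≫ₗ Submodule.quotEquivOfEq _ _ h ≪≫ₗ
    g.quotKerEquivOfSurjective hg⟩

/-- If a presentation of `M` by a free module splits off on cofinitely many coordinates, then
the remaining coordinates form the kernel of another presentation. -/
lemma exists_presentation_of_split_coords {I P M : Type*} [AddCommGroup P] [Module A P]
    [Module.Projective A P] [AddCommGroup M] [Module A M] (i : (I →₀ A) →ₗ[A] P) (p : P →ₗ[A] M)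
    (hi : Function.Injective i) (hp : Function.Surjective p) (h : Function.Exact i p)
    (J : Set I) (g : P →ₗ[A] (I →₀ A)) (hg : g ∘ₗ i = killCoords A J) :
    ∃ P' : Submodule A P, Module.Projective A P' ∧
      ∃ (i' : Finsupp.supported A A J →ₗ[A] P') (p' : P' →ₗ[A] M),
        Function.Injective i' ∧ Function.Surjective p' ∧ Function.Exact i' p' := by
  have hgi : ∀ x, g (i x) = killCoords A J x := fun x ↦ by rw [← hg]; rfl
  obtain ⟨e, hei, hre⟩ : ∃ e : P →ₗ[A] (I →₀ A), (∀ x, e (i x) = killCoords A J x) ∧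
      ∀ x, e (x - i (e x)) = 0 := by
    refine ⟨killCoords A J ∘ₗ g, fun x ↦ ?_, fun x ↦ ?_⟩
    · simp only [LinearMap.comp_apply, hgi, killCoords_killCoords]
    · simp only [LinearMap.comp_apply, map_sub, hgi, killCoords_killCoords, sub_self]
  have hproj : Module.Projective A (LinearMap.ker e) := by
    refine Module.Projective.of_split (LinearMap.ker e).subtype
      (LinearMap.codRestrict _ (LinearMap.id - i ∘ₗ e) hre) ?_
    refine LinearMap.ext fun x ↦ Subtype.ext ?_
    change (x : P) - i (e x) = x
    rw [show e x = 0 from x.2, map_zero, sub_zero]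
  refine ⟨LinearMap.ker e, hproj,
    i.restrict (p := Finsupp.supported A A J) (q := LinearMap.ker e) fun x hx ↦ ?_,
    p ∘ₗ (LinearMap.ker e).subtype, ?_, ?_, ?_⟩
  · rw [LinearMap.mem_ker, hei]
    exact (killCoords_eq_zero_iff J x).2 hx
  · intro x y hxy
    exact Subtype.ext (hi (congrArg Subtype.val hxy))
  · intro m
    obtain ⟨x, rfl⟩ := hp m
    refine ⟨⟨x - i (e x), hre x⟩, ?_⟩
    simp [h.apply_apply_eq_zero]
  · rintro ⟨x, hx⟩
    constructor
    · intro hx0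
      obtain ⟨y, rfl⟩ := (h x).1 hx0
      exact ⟨⟨y, (killCoords_eq_zero_iff J y).1 ((hei y).symm.trans hx)⟩, rfl⟩
    · rintro ⟨y, hy⟩
      have : x = i y := (congrArg Subtype.val hy).symm
      exact (h x).2 ⟨y, this.symm⟩

/-- A presentation with projective kernel can be replaced by one with free kernel. -/
lemma exists_free_presentation {P₁ P₀ M : Type*} [AddCommGroup P₁] [Module A P₁] [AddCommGroup P₀]
    [Module A P₀] [AddCommGroup M] [Module A M] [Module.Projective A P₁] (f : P₁ →ₗ[A] P₀)
    (p : P₀ →ₗ[A] M) (hf : Function.Injective f) (hp : Function.Surjective p)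
    (h : Function.Exact f p) :
    ∃ E : Submodule A (P₁ →₀ A), Module.Projective A E ∧
      ∃ (i' : (P₁ →₀ A) →ₗ[A] P₀ × E) (p' : P₀ × E →ₗ[A] M),
        Function.Injective i' ∧ Function.Surjective p' ∧ Function.Exact i' p' := by
  obtain ⟨s, hs⟩ := Module.projective_def'.1 ‹Module.Projective A P₁›
  let r := Finsupp.linearCombination A (id : P₁ → P₁)
  have hrs : ∀ x, r (s x) = x := fun x ↦ LinearMap.congr_fun hs x
  have hE := projective_ker_of_surjective r (fun x ↦ ⟨s x, hrs x⟩)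
  refine ⟨LinearMap.ker r, hE,
    (f ∘ₗ r).prod (LinearMap.codRestrict _ (LinearMap.id - s ∘ₗ r) fun x ↦ by simp [hrs]),
    p ∘ₗ LinearMap.fst _ _ _, ?_, hp.comp Prod.fst_surjective, ?_⟩
  · refine (injective_iff_map_eq_zero _).2 fun x hx ↦ ?_
    have h1 : r x = 0 := hf ((congrArg Prod.fst hx).trans (map_zero f).symm)
    have h2 : x - s (r x) = 0 := congrArg (fun y ↦ (y.2 : P₁ →₀ A)) hx
    simpa [h1] using h2
  · rintro ⟨a, b⟩
    constructor
    · intro ha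
      obtain ⟨y, rfl⟩ := (h a).1 ha
      have hb : r b = 0 := b.2
      refine ⟨s y + b, Prod.ext ?_ (Subtype.ext ?_)⟩
      · simp [hb, hrs]
      · simp [hb, hrs]
    · rintro ⟨x, hx⟩
      exact (h a).2 ⟨r x, congrArg Prod.fst hx⟩

end Modules

section Omega

variable {R : Type} [Ring R]

lemma isOmega1_of_exact {Q : RMod R → Prop} {K P : Type} [AddCommGroup K] [AddCommGroup P]
    [Module Rᵐᵒᵖ K] [Module Rᵐᵒᵖ P] {M : RMod R} (i : K →ₗ[Rᵐᵒᵖ] P) (p : P →ₗ[Rᵐᵒᵖ] M)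
    (hi : Function.Injective i) (hp : Function.Surjective p) (h : Function.Exact i p)
    [Module.Projective Rᵐᵒᵖ P] (hK : Q (ModuleCat.of Rᵐᵒᵖ K)) : IsOmega1 R Q M := by
  have hw : ModuleCat.ofHom i ≫ ModuleCat.ofHom p = (0 : ModuleCat.of Rᵐᵒᵖ K ⟶ M) := by
    ext x
    exact h.apply_apply_eq_zero x
  refine ⟨ModuleCat.of _ K, ModuleCat.of _ P, ModuleCat.ofHom i, ModuleCat.ofHom p, hw,
    (ModuleCat.mono_iff_injective _).2 hi, (ModuleCat.epi_iff_surjective _).2 hp, ?_,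
    (IsProjective.iff_projective P).1 inferInstance, hK⟩
  rw [ShortComplex.moduleCat_exact_iff]
  exact fun x hx ↦ (h x).1 hx

lemma exact_of_shortComplex_exact {K P M : RMod R} {i : K ⟶ P} {p : P ⟶ M} {w : i ≫ p = 0}
    (h : (ShortComplex.mk i p w).Exact) : Function.Exact i.hom p.hom :=
  (ShortComplex.ShortExact.moduleCat_exact_iff_function_exact _).1 h

/-- The first syzygy of a module of projective dimension at most one can be taken free. -/
lemma HasProjDimLE1.exists_free {M : RMod R} (hM : HasProjDimLE1 R M) :
    ∃ (I : Type) (P : RMod R) (i : ModuleCat.of Rᵐᵒᵖ (I →₀ Rᵐᵒᵖ) ⟶ P) (p : P ⟶ M)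
      (w : i ≫ p = 0), Mono i ∧ Epi p ∧ (ShortComplex.mk i p w).Exact ∧ Projective P := by
  obtain ⟨P₁, P₀, f, p, w, h₁, h₀, hf, hp, hex⟩ := hM
  rw [← IsProjective.iff_projective] at h₁ h₀
  obtain ⟨E, hE, i', p', hi', hp', hex'⟩ := exists_free_presentation f.hom p.hom
    ((ModuleCat.mono_iff_injective f).1 hf) ((ModuleCat.epi_iff_surjective p).1 hp)
    (exact_of_shortComplex_exact hex)
  obtain ⟨K, P, i, p, w, hi, hp, hex, hP, rfl⟩ :=
    isOmega1_of_exact (M := M) (P := P₀ × E) (Q := fun K ↦ K = ModuleCat.of Rᵐᵒᵖ (P₁ →₀ Rᵐᵒᵖ))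
      i' p' hi' hp' hex' rfl
  exact ⟨P₁, P, i, p, w, hi, hp, hex, hP⟩

end Omega

section StableEquivalence

variable {A : Type*} [Ring A]

/-- A module with finitely presented first syzygy is stably a quotient of a finitely generated free
module by a finitely presented submodule. -/
lemma exists_stable_equiv_of_presentation {K P M : Type*} [AddCommGroup K] [Module A K]
    [AddCommGroup P] [Module A P] [AddCommGroup M] [Module A M] [Module.Projective A P]
    [Module.Finite A K] (i : K →ₗ[A] P) (p : P →ₗ[A] M) (hi : Function.Injective i)
    (hp : Function.Surjective p) (h : Function.Exact i p) :
    ∃ (J : Set P) (L : Submodule A (P →₀ A)) (j : K →ₗ[A] (J →₀ A)),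
      J.Finite ∧ Module.Projective A L ∧ Function.Injective j ∧
      Nonempty ((M × L) ≃ₗ[A] (((J →₀ A) ⧸ LinearMap.range j) × ((Jᶜ : Set P) →₀ A))) := by
  classical
  obtain ⟨s, hs⟩ := Module.projective_def'.1 ‹Module.Projective A P›
  let r := Finsupp.linearCombination A (id : P → P)
  have hrs : ∀ x, r (s x) = x := fun x ↦ LinearMap.congr_fun hs x
  have hL := projective_ker_of_surjective r (fun x ↦ ⟨s x, hrs x⟩)
  obtain ⟨J, hJ, hJs⟩ := exists_finite_range_le_supported (s ∘ₗ i)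
  have hJ0 : ∀ k, ∀ a ∉ J, s (i k) a = 0 := fun k ↦ (Finsupp.mem_supported' A _).1 (hJs k)
  have hinj : Function.Injective (s ∘ₗ i) :=
    (Function.LeftInverse.injective hrs).comp hi
  let j : K →ₗ[A] (J →₀ A) := Finsupp.lsubtypeDomain J ∘ₗ s ∘ₗ i
  have hext : ∀ x y : P →₀ A, (∀ a ∈ J, x a = y a) → (∀ a ∉ J, x a = y a) → x = y :=
    fun x y h₁ h₂ ↦ Finsupp.ext fun a ↦ if ha : a ∈ J then h₁ a ha else h₂ a ha
  let f : (P →₀ A) →ₗ[A] M × LinearMap.ker r :=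
    (p ∘ₗ r).prod (LinearMap.codRestrict _ (LinearMap.id - s ∘ₗ r) fun x ↦ by simp [hrs])
  let g : (P →₀ A) →ₗ[A] ((J →₀ A) ⧸ LinearMap.range j) × ((Jᶜ : Set P) →₀ A) :=
    ((LinearMap.range j).mkQ ∘ₗ Finsupp.lsubtypeDomain J).prod (Finsupp.lsubtypeDomain Jᶜ)
  have hfker : ∀ x, f x = 0 ↔ ∃ k, s (i k) = x := by
    intro x
    constructor
    · intro hx
      obtain ⟨k, hk⟩ := (h (r x)).1 (congrArg Prod.fst hx)
      have h2 : x - s (r x) = 0 := congrArg Subtype.val (congrArg Prod.snd hx)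
      exact ⟨k, by rw [hk]; exact (sub_eq_zero.1 h2).symm⟩
    · rintro ⟨k, rfl⟩
      refine Prod.ext ?_ (Subtype.ext ?_)
      · simp [f, hrs, h.apply_apply_eq_zero]
      · simp [f, hrs]
  have hgker : ∀ x, g x = 0 ↔ ∃ k, s (i k) = x := by
    intro x
    constructor
    · intro hx
      obtain ⟨k, hk⟩ := (Submodule.Quotient.mk_eq_zero _).1 (congrArg Prod.fst hx)
      refine ⟨k, hext _ _ (fun a ha ↦ DFunLike.congr_fun hk ⟨a, ha⟩) fun a ha ↦ ?_⟩
      rw [hJ0 k a ha]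
      exact (DFunLike.congr_fun (congrArg Prod.snd hx) ⟨a, ha⟩).symm
    · rintro ⟨k, rfl⟩
      exact Prod.ext ((Submodule.Quotient.mk_eq_zero _).2 ⟨k, rfl⟩)
        (Finsupp.ext fun a ↦ hJ0 k a a.2)
  refine ⟨J, LinearMap.ker r, j, hJ, hL, fun x y hxy ↦ hinj <| hext _ _
      (fun a ha ↦ DFunLike.congr_fun hxy ⟨a, ha⟩)
      fun a ha ↦ (hJ0 x a ha).trans (hJ0 y a ha).symm,
    nonempty_linearEquiv_of_ker_eq (X := M × LinearMap.ker r) f g ?_ ?_ ?_⟩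
  · rintro ⟨m, x, hx⟩
    obtain ⟨y, rfl⟩ := hp m
    have hx' : r x = 0 := hx
    exact ⟨s y + x, Prod.ext (by simp [f, hrs, hx']) (Subtype.ext (by simp [f, hrs, hx']))⟩
  · rintro ⟨y, x⟩
    obtain ⟨y, rfl⟩ := Submodule.Quotient.mk_surjective _ y
    refine ⟨y.embDomain (Function.Embedding.subtype _) + x.embDomain (Function.Embedding.subtype _),
      Prod.ext (congrArg (LinearMap.range j).mkQ ?_) ?_⟩
    · refine Finsupp.ext fun a ↦ ?_
      have hx := Finsupp.embDomain_of_notMem_range (Function.Embedding.subtype (· ∈ Jᶜ)) x a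
        (by rintro ⟨b, hb⟩; exact b.2 ((show (b : P) = a from hb) ▸ a.2))
      exact (congrArg₂ (· + ·) (Finsupp.embDomain_apply_self _ y a) hx).trans (add_zero _)
    · refine Finsupp.ext fun a ↦ ?_
      have hy := Finsupp.embDomain_of_notMem_range (Function.Embedding.subtype (· ∈ J)) y a
        (by rintro ⟨b, hb⟩; exact a.2 ((show (b : P) = a from hb) ▸ b.2))
      exact (congrArg₂ (· + ·) hy (Finsupp.embDomain_apply_self _ x a)).trans (zero_add _)
  · ext x
    exact (hfker x).trans (hgker x).symm

/-- A syzygy of `H` is a syzygy of every module stably equivalent to `H`. -/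
lemma exists_presentation_of_stable_equiv {K Q H P M L : Type*} [AddCommGroup K] [Module A K]
    [AddCommGroup Q] [Module A Q] [AddCommGroup H] [Module A H] [AddCommGroup P] [Module A P]
    [AddCommGroup M] [Module A M] [AddCommGroup L] [Module A L] [Module.Projective A Q]
    [Module.Projective A P] [Module.Projective A L] (i : K →ₗ[A] Q) (p : Q →ₗ[A] H)
    (hi : Function.Injective i) (hp : Function.Surjective p) (h : Function.Exact i p)
    (e : (H × P) ≃ₗ[A] (M × L)) :
    ∃ X : Submodule A (Q × P), Module.Projective A X ∧
      ∃ (i' : K →ₗ[A] X) (p' : X →ₗ[A] M),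
        Function.Injective i' ∧ Function.Surjective p' ∧ Function.Exact i' p' := by
  obtain ⟨t, ht, htsurj⟩ : ∃ t : Q × P →ₗ[A] M × L, (∀ x, t x = 0 ↔ ∃ k, (i k, 0) = x) ∧
      Function.Surjective t := by
    refine ⟨e.toLinearMap ∘ₗ p.prodMap LinearMap.id, ?_, ?_⟩
    · rintro ⟨a, b⟩
      have : (p.prodMap LinearMap.id) (a, b) = 0 ↔ p a = 0 ∧ b = 0 := Prod.ext_iff
      rw [LinearMap.comp_apply, LinearEquiv.coe_coe, e.map_eq_zero_iff, this, h a]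
      constructor
      · rintro ⟨⟨k, rfl⟩, rfl⟩
        exact ⟨k, rfl⟩
      · rintro ⟨k, hk⟩
        exact ⟨⟨k, congrArg Prod.fst hk⟩, (congrArg Prod.snd hk).symm⟩
    · exact e.surjective.comp (hp.prodMap Function.surjective_id)
  refine ⟨LinearMap.ker (LinearMap.snd A M L ∘ₗ t),
    projective_ker_of_surjective _ (Prod.snd_surjective.comp htsurj),
    (LinearMap.inl A Q P ∘ₗ i).codRestrict _ fun k ↦ ?_,
    LinearMap.fst A M L ∘ₗ t ∘ₗ Submodule.subtype _, ?_, ?_, ?_⟩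
  · exact congrArg Prod.snd ((ht _).2 ⟨k, rfl⟩)
  · intro x y hxy
    exact hi (congrArg Prod.fst (congrArg Subtype.val hxy))
  · intro m
    obtain ⟨x, hx⟩ := htsurj (m, 0)
    exact ⟨⟨x, congrArg Prod.snd hx⟩, congrArg Prod.fst hx⟩
  · rintro ⟨x, hx⟩
    constructor
    · intro hx'
      obtain ⟨k, hk⟩ := (ht x).1 (Prod.ext hx' hx)
      exact ⟨k, Subtype.ext hk⟩
    · rintro ⟨k, hk⟩
      exact congrArg Prod.fst ((ht x).2 ⟨k, congrArg Subtype.val hk⟩)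

end StableEquivalence

section FP2

variable {R : Type} [Ring R]

lemma isFP2_quotient_range {K S : Type} [AddCommGroup K] [Module Rᵐᵒᵖ K] [AddCommGroup S]
    [Module Rᵐᵒᵖ S] [Module.FinitePresentation Rᵐᵒᵖ K] [Module.Projective Rᵐᵒᵖ S]
    [Module.Finite Rᵐᵒᵖ S] (j : K →ₗ[Rᵐᵒᵖ] S) (hj : Function.Injective j) :
    IsFP2 R (ModuleCat.of Rᵐᵒᵖ (S ⧸ LinearMap.range j)) := by
  obtain ⟨n, m, f, g, hf, hgf⟩ := Module.FinitePresentation.exists_fin' Rᵐᵒᵖ K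
  have hw₂ : ModuleCat.ofHom g ≫ ModuleCat.ofHom (j ∘ₗ f) = 0 := by
    refine ModuleCat.hom_ext (LinearMap.ext fun x ↦ ?_)
    exact (congrArg j (hgf.apply_apply_eq_zero x)).trans (map_zero j)
  have hw₁ : ModuleCat.ofHom (j ∘ₗ f) ≫ ModuleCat.ofHom (LinearMap.range j).mkQ = 0 := by
    refine ModuleCat.hom_ext (LinearMap.ext fun x ↦ ?_)
    exact (Submodule.Quotient.mk_eq_zero _).2 ⟨f x, rfl⟩
  refine ⟨_, _, _, _, _, _, hw₂, hw₁, (IsProjective.iff_projective _).1 inferInstance,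
    (IsProjective.iff_projective _).1 inferInstance, (IsProjective.iff_projective _).1 ‹_›,
    inferInstanceAs (Module.Finite Rᵐᵒᵖ (Fin m → Rᵐᵒᵖ)),
    inferInstanceAs (Module.Finite Rᵐᵒᵖ (Fin n → Rᵐᵒᵖ)), ‹_›,
    (ModuleCat.epi_iff_surjective _).2 (Submodule.mkQ_surjective _), ?_, ?_⟩
  · rw [ShortComplex.moduleCat_exact_iff]
    intro x hx
    exact (hgf x).1 (hj (hx.trans (map_zero j).symm))
  · rw [ShortComplex.moduleCat_exact_iff]
    intro x hx
    obtain ⟨k, rfl⟩ := (Submodule.Quotient.mk_eq_zero _).1 hx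
    obtain ⟨y, rfl⟩ := hf k
    exact ⟨y, rfl⟩

lemma IsFP2.exists_presentation {H : RMod R} (hH : IsFP2 R H) :
    ∃ (Q : RMod R) (K : Submodule Rᵐᵒᵖ Q) (p : Q →ₗ[Rᵐᵒᵖ] H), Module.Projective Rᵐᵒᵖ Q ∧
      Module.FinitePresentation Rᵐᵒᵖ K ∧ Function.Surjective p ∧ Function.Exact K.subtype p := by
  obtain ⟨P₂, P₁, P₀, d₂, d₁, p, w₂, w₁, h₂, h₁, h₀, f₂, f₁, f₀, hp, e₂, e₁⟩ := hH
  rw [← IsProjective.iff_projective] at h₁ h₀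
  have hfp := Module.finitePresentation_of_projective Rᵐᵒᵖ P₁
  have e₁' := exact_of_shortComplex_exact e₁
  have e₂' := exact_of_shortComplex_exact e₂
  refine ⟨P₀, LinearMap.range d₁.hom, p.hom, h₀, ?_, (ModuleCat.epi_iff_surjective p).1 hp, ?_⟩
  · refine Module.finitePresentation_of_surjective d₁.hom.rangeRestrict
      d₁.hom.surjective_rangeRestrict ?_
    rw [LinearMap.ker_rangeRestrict, e₂'.linearMap_ker_eq, LinearMap.range_eq_map]
    exact Submodule.FG.map _ (Module.finite_def.1 f₂)
  · rw [LinearMap.exact_iff, Submodule.range_subtype, e₁'.linearMap_ker_eq]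

lemma isOmega1_iff_stably_isFP2 (M : RMod R) :
    IsOmega1 R (fun K ↦ Module.FinitePresentation Rᵐᵒᵖ K) M ↔
      ∃ (L H P : RMod R), Projective L ∧ IsFP2 R H ∧ Projective P ∧
        Nonempty ((M ⊞ L) ≅ (H ⊞ P)) := by
  constructor
  · rintro ⟨K, P, i, p, w, hi, hp, hex, hP, hK⟩
    rw [← IsProjective.iff_projective] at hP
    obtain ⟨J, L, j, hJ, hL, hj, ⟨e⟩⟩ := exists_stable_equiv_of_presentation i.hom p.hom
      ((ModuleCat.mono_iff_injective i).1 hi) ((ModuleCat.epi_iff_surjective p).1 hp)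
      (exact_of_shortComplex_exact hex)
    have := hJ.to_subtype
    refine ⟨ModuleCat.of _ L, _, ModuleCat.of _ ((Jᶜ : Set P) →₀ Rᵐᵒᵖ),
      (IsProjective.iff_projective _).1 hL, isFP2_quotient_range j hj,
      (IsProjective.iff_projective _).1 inferInstance, ⟨?_⟩⟩
    exact ModuleCat.biprodIsoProd _ _ ≪≫ e.toModuleIso ≪≫ (ModuleCat.biprodIsoProd _ _).symm
  · rintro ⟨L, H, P, hL, hH, hP, ⟨e⟩⟩
    rw [← IsProjective.iff_projective] at hL hP
    obtain ⟨Q, K, p, hQ, hK, hp, hex⟩ := hH.exists_presentation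
    let e' := (ModuleCat.biprodIsoProd H P).symm ≪≫ e.symm ≪≫ ModuleCat.biprodIsoProd M L
    obtain ⟨X, hX, i', p', hi', hp', hex'⟩ := exists_presentation_of_stable_equiv K.subtype p
      K.injective_subtype hp hex e'.toLinearEquiv
    exact isOmega1_of_exact (M := M) (P := X) i' p' hi' hp' hex' hK

end FP2

section DirectLimits

lemma exists_factor_of_ker_le {A F K N : Type*} [Ring A] [AddCommGroup F] [Module A F]
    [AddCommGroup K] [Module A K] [AddCommGroup N] [Module A N] (q : F →ₗ[A] K)
    (hq : Function.Surjective q) (g : F →ₗ[A] N) (h : LinearMap.ker q ≤ LinearMap.ker g) :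
    ∃ t : K →ₗ[A] N, ∀ x, t (q x) = g x := by
  refine ⟨(LinearMap.ker q).liftQ g h ∘ₗ (q.quotKerEquivOfSurjective hq).symm.toLinearMap,
    fun x ↦ ?_⟩
  have : (q.quotKerEquivOfSurjective hq).symm (q x) = Submodule.Quotient.mk x :=
    (LinearEquiv.symm_apply_eq _).2 rfl
  rw [LinearMap.comp_apply, LinearEquiv.coe_coe, this]
  rfl

variable {A : Type} [Ring A] {J : Type} [Category.{0} J] [IsFiltered J]
  {D : J ⥤ ModuleCat.{0} A} {c : Cocone D}

lemma exists_comp_map_eq_of_finite (hc : IsColimit c) {K : ModuleCat.{0} A} [Module.Finite A K]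
    {j : J} (g g' : K ⟶ D.obj j) (h : g ≫ c.ι.app j = g' ≫ c.ι.app j) :
    ∃ (k : J) (u : j ⟶ k), g ≫ D.map u = g' ≫ D.map u := by
  classical
  have key : ∀ S : Finset K, ∃ (k : J) (u : j ⟶ k), ∀ x ∈ S, D.map u (g x) = D.map u (g' x) := by
    intro S
    induction S using Finset.induction_on with
    | empty => exact ⟨j, 𝟙 j, by simp⟩
    | insert x S _ ih =>
      obtain ⟨k, u, hu⟩ := ih
      have hx : c.ι.app k (D.map u (g x)) = c.ι.app k (D.map u (g' x)) := by
        have hw (z : D.obj j) : c.ι.app k (D.map u z) = c.ι.app j z :=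
          ConcreteCategory.congr_hom (c.w u) z
        rw [hw, hw]
        exact ConcreteCategory.congr_hom h x
      obtain ⟨l, v, hv⟩ := (IsColimit.eq_iff' hc _ _).1 hx
      refine ⟨l, u ≫ v, fun y hy ↦ ?_⟩
      rw [D.map_comp, CategoryTheory.comp_apply, CategoryTheory.comp_apply]
      rcases Finset.mem_insert.1 hy with rfl | hy
      · exact hv
      · rw [hu y hy]
  obtain ⟨S, hS⟩ := Module.finite_def.1 ‹Module.Finite A K›
  obtain ⟨k, u, hu⟩ := key S
  exact ⟨k, u, ModuleCat.hom_ext (LinearMap.ext_on hS fun x hx ↦ hu x hx)⟩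

lemma exists_comp_ι_eq_of_finitePresentation (hc : IsColimit c) {K : ModuleCat.{0} A}
    [Module.FinitePresentation A K] (f : K ⟶ c.pt) :
    ∃ (j : J) (g : K ⟶ D.obj j), g ≫ c.ι.app j = f := by
  classical
  obtain ⟨n, m, q, r, hq, hr⟩ := Module.FinitePresentation.exists_fin' A K
  choose a y hy using fun l : Fin n ↦ Concrete.isColimit_exists_rep D hc (f (q (Pi.single l 1)))
  obtain ⟨j, hj⟩ := IsFiltered.sup_objs_exists (Finset.univ.image a)
  let v (l : Fin n) : a l ⟶ j := (hj (by simp)).some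
  obtain ⟨g, hg⟩ : ∃ g : ModuleCat.of A (Fin n → A) ⟶ D.obj j,
      g ≫ c.ι.app j = ModuleCat.ofHom q ≫ f := by
    refine ⟨ModuleCat.ofHom ((Pi.basisFun A (Fin n)).constr ℕ fun l ↦ D.map (v l) (y l)),
      ModuleCat.hom_ext ((Pi.basisFun A (Fin n)).ext fun l ↦ ?_)⟩
    refine (congrArg (c.ι.app j) ((Pi.basisFun A (Fin n)).constr_basis ℕ _ l)).trans ?_
    refine (ConcreteCategory.congr_hom (c.w (v l)) (y l)).trans ((hy l).trans ?_)
    rw [← Pi.basisFun_apply]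
    rfl
  obtain ⟨k, u, hu⟩ := exists_comp_map_eq_of_finite hc (ModuleCat.ofHom r ≫ g) 0 (by
    rw [Category.assoc, hg, zero_comp]
    refine ModuleCat.hom_ext (LinearMap.ext fun x ↦ ?_)
    exact (congrArg f (hr.apply_apply_eq_zero x)).trans (map_zero f.hom))
  rw [zero_comp] at hu
  have hker : LinearMap.ker q ≤ LinearMap.ker (g ≫ D.map u).hom := by
    intro x hx
    obtain ⟨z, rfl⟩ := (hr x).1 hx
    have hz : (g ≫ D.map u) (r z) = 0 := ConcreteCategory.congr_hom hu z
    exact hz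
  obtain ⟨t, ht⟩ := exists_factor_of_ker_le q hq (g ≫ D.map u).hom hker
  refine ⟨k, ModuleCat.ofHom t, ModuleCat.hom_ext (LinearMap.ext fun x ↦ ?_)⟩
  obtain ⟨x, rfl⟩ := hq x
  change c.ι.app k (t (q x)) = f (q x)
  rw [ht]
  exact (ConcreteCategory.congr_hom (c.w u) (g x)).trans (ConcreteCategory.congr_hom hg x)

lemma exists_extension_of_isColimit (hc : IsColimit c) {K P : ModuleCat.{0} A} (i : K ⟶ P)
    [Module.Finite A K] [Module.Projective A P] {j : J} (f : K ⟶ D.obj j) (h : P ⟶ c.pt)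
    (hf : i ≫ h = f ≫ c.ι.app j) :
    ∃ (k : J) (u : j ⟶ k) (h' : P ⟶ D.obj k), i ≫ h' = f ≫ D.map u := by
  classical
  obtain ⟨s, hs⟩ := Module.projective_def'.1 ‹Module.Projective A P›
  obtain ⟨S, hS, hSs⟩ := exists_finite_range_le_supported (s ∘ₗ i.hom)
  have := finitePresentation_supported (A := A) S hS
  let T := ModuleCat.of A (Finsupp.supported A A S)
  let t : P ⟶ T := ModuleCat.ofHom (Finsupp.restrictDom A A S ∘ₗ s)
  let b : T ⟶ P :=
    ModuleCat.ofHom (Finsupp.linearCombination A (id : P → P) ∘ₗ (Finsupp.supported A A S).subtype)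
  have htb : i ≫ t ≫ b = i := by
    refine ModuleCat.hom_ext (LinearMap.ext fun x ↦ ?_)
    have h₁ : Finsupp.restrictDom A A S (s (i x)) = ⟨s (i x), hSs x⟩ := by
      refine Subtype.ext ?_
      rw [Finsupp.restrictDom_apply, Finsupp.filter_eq_self_iff]
      exact fun a ha ↦ by_contra fun ha' ↦ ha ((Finsupp.mem_supported' A _).1 (hSs x) a ha')
    change Finsupp.linearCombination A (id : P → P) (Finsupp.restrictDom A A S (s (i x))).1 = i x
    rw [h₁]
    exact LinearMap.congr_fun hs (i x)
  obtain ⟨k, g, hg⟩ := exists_comp_ι_eq_of_finitePresentation hc (K := T) (b ≫ h)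
  obtain ⟨l, u, hu⟩ := exists_comp_map_eq_of_finite hc
    (i ≫ t ≫ g ≫ D.map (IsFiltered.leftToMax k j)) (f ≫ D.map (IsFiltered.rightToMax k j)) (by
      simp only [Category.assoc, c.w]
      rw [hg, ← hf]
      simpa using htb =≫ h)
  refine ⟨l, IsFiltered.rightToMax k j ≫ u, t ≫ g ≫ D.map (IsFiltered.leftToMax k j) ≫ D.map u, ?_⟩
  simpa using hu

lemma preservesColimitsOfShape_of_presentation {K P : ModuleCat.{0} A} (i : K ⟶ P)
    [Module.FinitePresentation A K] [Module.Projective A P] (E : ModuleCat.{0} A ⥤ ModuleCat.{0} ℤ)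
    (δ : ∀ N : ModuleCat.{0} A, (K ⟶ N) → E.obj N)
    (hsub : ∀ N f g, δ N (f - g) = δ N f - δ N g) (hsurj : ∀ N, Function.Surjective (δ N))
    (hzero : ∀ N f, δ N f = 0 ↔ ∃ h, i ≫ h = f)
    (hmap : ∀ N N' (g : N ⟶ N') f, E.map g (δ N f) = δ N' (f ≫ g)) :
    PreservesColimitsOfShape J E where
  preservesColimit {D} := ⟨fun {c} hc ↦ ⟨by
    refine isColimitOfReflects (forget (ModuleCat ℤ)) (Types.FilteredColimit.isColimitOf' _ _ ?_ ?_)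
    · intro x
      obtain ⟨f, rfl⟩ := hsurj _ x
      obtain ⟨j, g, rfl⟩ := exists_comp_ι_eq_of_finitePresentation hc f
      exact ⟨j, δ _ g, (hmap _ _ _ _).symm⟩
    · intro j x y hxy
      obtain ⟨f, rfl⟩ := hsurj _ x
      obtain ⟨g, rfl⟩ := hsurj _ y
      replace hxy : E.map (c.ι.app j) (δ _ f) = E.map (c.ι.app j) (δ _ g) := hxy
      rw [hmap, hmap, ← sub_eq_zero, ← hsub, hzero] at hxy
      obtain ⟨h, hh⟩ := hxy
      rw [← Preadditive.sub_comp] at hh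
      obtain ⟨k, u, h', hu⟩ := exists_extension_of_isColimit hc i (f - g) h hh
      refine ⟨k, u, ?_⟩
      change E.map (D.map u) (δ _ f) = E.map (D.map u) (δ _ g)
      rw [hmap, hmap, ← sub_eq_zero, ← hsub, hzero]
      exact ⟨h', by rw [hu, Preadditive.sub_comp]⟩⟩⟩

end DirectLimits

section Coproducts

variable {A : Type} [Ring A] {I : Type} [DecidableEq I]

lemma exists_sum_ι_π_eq (X : I → ModuleCat.{0} A) (z : (∐ X : ModuleCat.{0} A)) :
    ∃ S : Finset I, ∀ T : Finset I, S ⊆ T → ∑ i ∈ T, Sigma.ι X i (Sigma.π X i z) = z := by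
  obtain ⟨w, rfl⟩ : ∃ w, z = (ModuleCat.coprodIsoDirectSum X).inv w :=
    ⟨_, (Iso.hom_inv_id_apply _ z).symm⟩
  induction w using DirectSum.induction_on with
  | zero => exact ⟨∅, fun T _ ↦ by simp⟩
  | of i x =>
    have hx : (ModuleCat.coprodIsoDirectSum X).inv (DirectSum.of (fun i ↦ X i) i x) =
        Sigma.ι X i x :=
      ConcreteCategory.congr_hom (ModuleCat.lof_coprodIsoDirectSum_inv X i) x
    refine ⟨{i}, fun T hT ↦ ?_⟩
    rw [hx, Finset.sum_eq_single_of_mem i (by simpa using hT)]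
    · exact congrArg (Sigma.ι X i) (ConcreteCategory.congr_hom (Sigma.ι_π_eq_id X i) x)
    · intro j _ hj
      refine (congrArg (Sigma.ι X j)
        (ConcreteCategory.congr_hom (Sigma.ι_π_of_ne X hj.symm) x)).trans ?_
      exact map_zero (Sigma.ι X j).hom
  | add x y hx hy =>
    obtain ⟨S, hS⟩ := hx
    obtain ⟨S', hS'⟩ := hy
    refine ⟨S ∪ S', fun T hT ↦ ?_⟩
    have h₁ := hS T (Finset.union_subset_left hT)
    have h₂ := hS' T (Finset.union_subset_right hT)
    simp only [map_add, Finset.sum_add_distrib]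
    rw [h₁, h₂]

lemma exists_sum_comp_π_ι_eq (X : I → ModuleCat.{0} A) {K : ModuleCat.{0} A} [Module.Finite A K]
    (f : K ⟶ ∐ X) : ∃ S : Finset I, ∑ i ∈ S, f ≫ Sigma.π X i ≫ Sigma.ι X i = f := by
  obtain ⟨G, hG⟩ := Module.finite_def.1 ‹Module.Finite A K›
  choose S hS using exists_sum_ι_π_eq X
  refine ⟨G.biUnion fun x ↦ S (f x), ModuleCat.hom_ext (LinearMap.ext_on hG fun x hx ↦ ?_)⟩
  rw [ModuleCat.hom_sum, LinearMap.sum_apply]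
  exact hS (f x) _ (Finset.subset_biUnion_of_mem (fun x ↦ S (f x)) hx)

end Coproducts

section Functors

variable {A : Type} [Ring A] {I : Type} (E : ModuleCat.{0} A ⥤ ModuleCat.{0} ℤ)

lemma isIso_sigmaDesc_of_presentation {K P : ModuleCat.{0} A} (i : K ⟶ P) [Module.Finite A K]
    (δ : ∀ N : ModuleCat.{0} A, (K ⟶ N) → E.obj N)
    (hadd : ∀ N f g, δ N (f + g) = δ N f + δ N g) (hsurj : ∀ N, Function.Surjective (δ N))
    (hzero : ∀ N f, δ N f = 0 ↔ ∃ h, i ≫ h = f)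
    (hmap : ∀ N N' (g : N ⟶ N') f, E.map g (δ N f) = δ N' (f ≫ g)) (X : I → ModuleCat.{0} A) :
    IsIso (Sigma.desc fun j ↦ E.map (Sigma.ι X j)) := by
  classical
  have hmap0 : ∀ N N', E.map (0 : N ⟶ N') = 0 := by
    intro N N'
    refine ModuleCat.hom_ext (LinearMap.ext fun x ↦ ?_)
    obtain ⟨f, rfl⟩ := hsurj _ x
    refine (hmap _ _ _ _).trans ((hzero _ _).2 ⟨0, ?_⟩)
    rw [comp_zero, comp_zero]
  have hπ (j : I) : Sigma.desc (fun j ↦ E.map (Sigma.ι X j)) ≫ E.map (Sigma.π X j) =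
      Sigma.π (fun j ↦ E.obj (X j)) j := by
    refine Sigma.hom_ext _ _ fun k ↦ ?_
    rw [Sigma.ι_desc_assoc, ← E.map_comp]
    rcases eq_or_ne k j with rfl | hkj
    · rw [Sigma.ι_π_eq_id, Sigma.ι_π_eq_id, E.map_id]
    · rw [Sigma.ι_π_of_ne _ hkj, Sigma.ι_π_of_ne _ hkj, hmap0]
  rw [ConcreteCategory.isIso_iff_bijective]
  constructor
  · refine (injective_iff_map_eq_zero (Sigma.desc fun j ↦ E.map (Sigma.ι X j)).hom).2 fun z hz ↦ ?_
    obtain ⟨S, hS⟩ := exists_sum_ι_π_eq (fun j ↦ E.obj (X j)) z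
    rw [← hS S subset_rfl]
    refine Finset.sum_eq_zero fun j _ ↦ ?_
    have hj : Sigma.π (fun j ↦ E.obj (X j)) j z = 0 :=
      (ConcreteCategory.congr_hom (hπ j) z).symm.trans
        ((congrArg (E.map (Sigma.π X j)) hz).trans (map_zero (E.map (Sigma.π X j)).hom))
    exact (congrArg _ hj).trans (map_zero (Sigma.ι (fun j ↦ E.obj (X j)) j).hom)
  · intro y
    obtain ⟨f, rfl⟩ := hsurj _ y
    obtain ⟨S, hS⟩ := exists_sum_comp_π_ι_eq X f
    refine ⟨∑ j ∈ S, Sigma.ι (fun j ↦ E.obj (X j)) j (δ _ (f ≫ Sigma.π X j)), ?_⟩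
    have hsum : δ _ (∑ j ∈ S, f ≫ Sigma.π X j ≫ Sigma.ι X j) =
        ∑ j ∈ S, δ _ (f ≫ Sigma.π X j ≫ Sigma.ι X j) :=
      map_sum (AddMonoidHom.mk' (δ (∐ X)) (hadd _)) _ _
    refine (map_sum (Sigma.desc fun j ↦ E.map (Sigma.ι X j)).hom _ _).trans ?_
    rw [hS] at hsum
    rw [hsum]
    refine Finset.sum_congr rfl fun j _ ↦ ?_
    refine (ConcreteCategory.congr_hom
      (Sigma.ι_desc (fun j ↦ E.map (Sigma.ι X j)) j) _).trans ((hmap _ _ _ _).trans ?_)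
    rw [Category.assoc]

/-- The finite coordinate subspaces of a free module, ordered by inclusion. -/
def coordDiagram (A : Type) [Ring A] (I : Type) : Finset I ⥤ ModuleCat.{0} A where
  obj S := ModuleCat.of A (Finsupp.supported A A (S : Set I))
  map u := ModuleCat.ofHom (Submodule.inclusion (Finsupp.supported_mono (leOfHom u)))

/-- A free module as a cocone over its finite coordinate subspaces. -/
def coordCocone (A : Type) [Ring A] (I : Type) : Cocone (coordDiagram A I) where
  pt := ModuleCat.of A (I →₀ A)
  ι := { app S := ModuleCat.ofHom (Finsupp.supported A A (S : Set I)).subtype }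

/-- A free module is the colimit of its finite coordinate subspaces. -/
def isColimitCoordCocone (A : Type) [Ring A] (I : Type) : IsColimit (coordCocone A I) := by
  classical
  refine isColimitOfReflects (forget (ModuleCat A)) (Types.FilteredColimit.isColimitOf' _ _ ?_ ?_)
  · intro x
    let x' : I →₀ A := x
    exact ⟨x'.support, ⟨x', (Finsupp.mem_supported A x').2 subset_rfl⟩, rfl⟩
  · intro S x y hxy
    have : x = y := Subtype.ext hxy
    exact ⟨S, 𝟙 S, by rw [this]⟩

lemma exists_map_killCoords_eq_zero (hE : ∀ N N', E.map (0 : N ⟶ N') = 0)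
    [PreservesColimitsOfShape (Finset I) E]
    (x : E.obj (ModuleCat.of A (I →₀ A))) :
    ∃ S : Finset I, E.map (ModuleCat.ofHom (killCoords A (S : Set I))) x = 0 := by
  classical
  obtain ⟨S, y, rfl⟩ := Concrete.isColimit_exists_rep _
    (isColimitOfPreserves E (isColimitCoordCocone A I)) x
  have h0 : (coordCocone A I).ι.app S ≫ ModuleCat.ofHom (killCoords A (S : Set I)) = 0 := by
    refine ModuleCat.hom_ext (LinearMap.ext fun z ↦ ?_)
    exact (killCoords_eq_zero_iff _ _).2 z.2
  have h1 := E.map_comp ((coordCocone A I).ι.app S) (ModuleCat.ofHom (killCoords A (S : Set I)))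
  rw [h0, hE] at h1
  exact ⟨S, (ConcreteCategory.congr_hom h1 y).symm⟩

lemma exists_map_killCoords_eq_zero_of_isIso_sigmaDesc (hE : ∀ N N', E.map (0 : N ⟶ N') = 0)
    {B : ModuleCat.{0} A} (e : B ≅ ModuleCat.of A A)
    [hiso : IsIso (Sigma.desc fun j : I ↦ E.map (Sigma.ι (fun _ : I ↦ B) j))]
    (x : E.obj (ModuleCat.of A (I →₀ A))) :
    ∃ S : Finset I, E.map (ModuleCat.ofHom (killCoords A (S : Set I))) x = 0 := by
  classical
  let φ : (∐ fun _ : I ↦ B) ⟶ ModuleCat.of A (I →₀ A) :=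
    Sigma.desc fun j ↦ e.hom ≫ ModuleCat.ofHom (Finsupp.lsingle j)
  let ψ : ModuleCat.of A (I →₀ A) ⟶ ∐ fun _ : I ↦ B :=
    ModuleCat.ofHom (Finsupp.lsum ℕ fun j ↦ (e.inv ≫ Sigma.ι (fun _ : I ↦ B) j).hom)
  have hψφ : ψ ≫ φ = 𝟙 _ := by
    have h₁ (j : I) : ModuleCat.ofHom (Finsupp.lsingle j) ≫ ψ =
        e.inv ≫ Sigma.ι (fun _ : I ↦ B) j := by
      refine ModuleCat.hom_ext (LinearMap.ext fun a ↦ ?_)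
      exact Finsupp.lsum_single ℕ _ j a
    refine ModuleCat.hom_ext (Finsupp.lhom_ext' fun j ↦ ?_)
    refine congrArg ModuleCat.Hom.hom (?_ : ModuleCat.ofHom (Finsupp.lsingle j) ≫ ψ ≫ φ =
      ModuleCat.ofHom (Finsupp.lsingle j) ≫ 𝟙 _)
    rw [reassoc_of% (h₁ j), Category.comp_id, Sigma.ι_desc, e.inv_hom_id_assoc]
  obtain ⟨w, hw⟩ := ((ConcreteCategory.isIso_iff_bijective _).1 hiso).2 (E.map ψ x)
  obtain ⟨S, hS⟩ := exists_sum_ι_π_eq (fun _ : I ↦ E.obj B) w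
  refine ⟨S, ?_⟩
  let κ := ModuleCat.ofHom (killCoords A (S : Set I))
  have hx : E.map φ (E.map ψ x) = x := by
    rw [← CategoryTheory.comp_apply, ← E.map_comp, hψφ, E.map_id, CategoryTheory.id_apply]
  have hker (j : I) (hj : j ∈ S) : Sigma.ι (fun _ : I ↦ E.obj B) j ≫
      Sigma.desc (fun j : I ↦ E.map (Sigma.ι (fun _ : I ↦ B) j)) ≫ E.map φ ≫ E.map κ = 0 := by
    rw [Sigma.ι_desc_assoc, ← E.map_comp, ← E.map_comp, Sigma.ι_desc_assoc, Category.assoc]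
    have : ModuleCat.ofHom (Finsupp.lsingle j) ≫ κ =
        (0 : ModuleCat.of A A ⟶ ModuleCat.of A (I →₀ A)) := by
      refine ModuleCat.hom_ext (LinearMap.ext fun a ↦ ?_)
      exact (killCoords_eq_zero_iff _ _).2 (Finsupp.single_mem_supported A a (by simpa using hj))
    rw [this, comp_zero, hE]
  rw [← hx, ← hw, ← hS S subset_rfl]
  refine (map_sum (Sigma.desc (fun j : I ↦ E.map (Sigma.ι (fun _ : I ↦ B) j)) ≫
    E.map φ ≫ E.map κ).hom _ _).trans (Finset.sum_eq_zero fun j hj ↦ ?_)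
  exact ConcreteCategory.congr_hom (hker j hj) _

end Functors

section ExtFunctor

variable {R : Type} [Ring R] {M : RMod R}

lemma extFun_map_zero (N N' : RMod R) : (extFun R 1 M).map (0 : N ⟶ N') = 0 := by
  obtain ⟨δ, -, -, hsurj, hzero, hmap⟩ := exists_connecting_map (A := ℤ)
    (kernel.ι (Projective.π M)) (Projective.π M) (kernel.condition _)
    (ShortComplex.exact_of_f_is_kernel _ (kernelIsKernel _))
  refine ModuleCat.hom_ext (LinearMap.ext fun x ↦ ?_)
  obtain ⟨f, rfl⟩ := hsurj _ x
  refine (hmap _ _ _ _).trans ((hzero _ _).2 ⟨0, ?_⟩)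
  rw [comp_zero, comp_zero]

/-- A module of projective dimension at most one is an fp-Ω¹-module as soon as every class in
`Ext¹(M, R^{(I)})` is killed by the projection away from finitely many coordinates. -/
lemma HasProjDimLE1.isOmega1 (hM : HasProjDimLE1 R M)
    (h : ∀ (I : Type) (x : (extFun R 1 M).obj (ModuleCat.of Rᵐᵒᵖ (I →₀ Rᵐᵒᵖ))),
      ∃ S : Finset I,
        (extFun R 1 M).map (ModuleCat.ofHom (killCoords Rᵐᵒᵖ (S : Set I))) x = 0) :
    IsOmega1 R (fun K ↦ Module.FinitePresentation Rᵐᵒᵖ K) M := by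
  obtain ⟨I, P, i, p, w, hi, hp, hex, hP⟩ := hM.exists_free
  obtain ⟨δ, -, -, -, hzero, hmap⟩ := exists_connecting_map (A := ℤ) i p w hex
  obtain ⟨S, hS⟩ := h I (δ _ (𝟙 _))
  have hS' := (hmap _ _ _ _).symm.trans hS
  rw [Category.id_comp, hzero] at hS'
  obtain ⟨g, hg⟩ := hS'
  rw [← IsProjective.iff_projective] at hP
  obtain ⟨P', hP', i', p', hi', hp', hex'⟩ := exists_presentation_of_split_coords i.hom p.hom
    ((ModuleCat.mono_iff_injective i).1 hi) ((ModuleCat.epi_iff_surjective p).1 hp)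
    (exact_of_shortComplex_exact hex) (S : Set I) g.hom (congrArg ModuleCat.Hom.hom hg)
  have hK := finitePresentation_supported (A := Rᵐᵒᵖ) (S : Set I) S.finite_toSet
  exact isOmega1_of_exact (M := M) (K := Finsupp.supported Rᵐᵒᵖ Rᵐᵒᵖ (S : Set I)) (P := P')
    i' p' hi' hp' hex' hK

lemma HasProjDimLE1.isOmega1_iff_commutesWithDirectLimits (hM : HasProjDimLE1 R M) :
    IsOmega1 R (fun K ↦ Module.FinitePresentation Rᵐᵒᵖ K) M ↔ CommutesWithDirectLimits R M := by
  classical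
  constructor
  · rintro ⟨K, P, i, p, w, hi, hp, hex, hP, hK⟩ J _ _ _
    obtain ⟨δ, -, hsub, hsurj, hzero, hmap⟩ := exists_connecting_map (A := ℤ) i p w hex
    rw [← IsProjective.iff_projective] at hP
    exact preservesColimitsOfShape_of_presentation i (extFun R 1 M) δ hsub hsurj hzero hmap
  · intro h
    refine hM.isOmega1 fun I x ↦ ?_
    have := h (Finset I)
    exact exists_map_killCoords_eq_zero (extFun R 1 M) extFun_map_zero x

/-- The ring as a right module over itself, viewed as a left module over the opposite ring. -/
def regIso (R : Type) [Ring R] : regR R ≅ ModuleCat.of Rᵐᵒᵖ Rᵐᵒᵖ :=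
  LinearEquiv.toModuleIso
    { MulOpposite.opAddEquiv (α := R) with
      map_smul' := fun _ _ ↦ MulOpposite.unop_injective rfl }

lemma HasProjDimLE1.isOmega1_iff_commutesWithSumsOfR (hM : HasProjDimLE1 R M) :
    IsOmega1 R (fun K ↦ Module.FinitePresentation Rᵐᵒᵖ K) M ↔ CommutesWithSumsOfR R 1 M := by
  constructor
  · rintro ⟨K, P, i, p, w, hi, hp, hex, hP, hK⟩ I
    obtain ⟨δ, hadd, -, hsurj, hzero, hmap⟩ := exists_connecting_map (A := ℤ) i p w hex
    exact isIso_sigmaDesc_of_presentation (extFun R 1 M) i δ hadd hsurj hzero hmap _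
  · intro h
    refine hM.isOmega1 fun I x ↦ ?_
    have := h I
    exact exists_map_killCoords_eq_zero_of_isIso_sigmaDesc (extFun R 1 M) extFun_map_zero
      (regIso R) x

end ExtFunctor

theorem projdim1_tfae (R : Type) [Ring R] (M : RMod R) (hpd : HasProjDimLE1 R M) :
    (IsOmega1 R (fun K => Module.FinitePresentation Rᵐᵒᵖ K) M ↔
      ∃ (L H P : RMod R), Projective L ∧ IsFP2 R H ∧ Projective P ∧
        Nonempty ((M ⊞ L) ≅ (H ⊞ P))) ∧
    (IsOmega1 R (fun K => Module.FinitePresentation Rᵐᵒᵖ K) M ↔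
      CommutesWithDirectLimits R M) ∧
    (IsOmega1 R (fun K => Module.FinitePresentation Rᵐᵒᵖ K) M ↔
      CommutesWithSumsOfR R 1 M) :=
  ⟨isOmega1_iff_stably_isFP2 M, hpd.isOmega1_iff_commutesWithDirectLimits,
    hpd.isOmega1_iff_commutesWithSumsOfR⟩
end
end
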